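/- arXiv:1103.5223 — 8 statements merged into one kernel-verified Lean document; each statement's English description precedes it below -/
import Mathlib

section
/- For every integer n ≥ 1, the inclusion into 𝒞ⁿ of the subspace S consisting of configurations with at most one point is a weak homotopy equivalence: it induces a bijection on path components and isomorphisms on all homotopy groups πᵢ (i ≥ 1) at every basepoint in S. -/
/-!
The subspace `S` of configurations with at most one point is a strong deformation retract
of `𝒞ⁿ`, which gives all the bijections at once.

For a configuration `c` let `d₂(c) ∈ (0, ∞]` be the norm of its second closest point to the
origin (`∞` if `c` has at most one point). It depends continuously on `c`, because points can
neither collide nor appear or disappear except at infinity; so `u(c) = 1 / d₂(c)` (`invDist2`) is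
a continuous function `𝒞ⁿ → [0, ∞)`, and it vanishes on `S`.

For `s ≥ 0` the map `ψ_s(y) = y / (1 + s‖y‖)` is a radial homeomorphism from `ℝⁿ` onto the open
ball of radius `1 / s`. Pulling back along `ψ_s` (`expand s`) pushes the points of a
configuration outwards, and those of norm at least `1 / s` disappear at infinity; this is
jointly continuous in `s` and the configuration (`continuous_expand`). The homotopy
`(t, c) ↦ expand (t * u(c)) c` is the identity at time `0` and on `S`. At time `1` only the points
of norm less than `d₂(c)` survive, and there is at most one of those.
-/

open Metric Set

noncomputable section

/-- `ℝⁿ` as Euclidean space. -/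
abbrev Euc (n : ℕ) : Type := EuclideanSpace ℝ (Fin n)

/-- The set `𝒞ⁿ` of finite subsets of `ℝⁿ` (including the empty set). -/
def ConfSp (n : ℕ) : Type := {c : Set (Euc n) // c.Finite}

/-- The space of injective `p`-tuples of points of `U ⊆ ℝⁿ`, topologized as a subspace
of the product `(ℝⁿ)ᵖ`. -/
def InjTup (n p : ℕ) (U : Set (Euc n)) : Set (Fin p → Euc n) :=
  {f | Function.Injective f ∧ ∀ i, f i ∈ U}

/-- `V` is an open set of `p`-element subsets of `U`, for the quotient topology induced
by the map sending an injective `p`-tuple in `U` to its underlying `p`-element set. -/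
def IsOpenPSubsets (n p : ℕ) (U : Set (Euc n)) (V : Set (Set (Euc n))) : Prop :=
  (∀ s ∈ V, s ⊆ U ∧ s.ncard = p) ∧
    IsOpen {f : InjTup n p U | Set.range (f : Fin p → Euc n) ∈ V}

/-- The topology on `𝒞ⁿ` generated by the basic sets `C(B,V)`, where `B` is a closed ball
centered at the origin, `V` is an open set of `p`-element subsets of the interior of `B`,
and `C(B,V)` consists of the finite sets `c` with `c ∩ ∂B = ∅` and `c ∩ B ∈ V`. -/
instance ConfSp.topologicalSpace (n : ℕ) : TopologicalSpace (ConfSp n) :=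
  TopologicalSpace.generateFrom
    {S | ∃ (r : ℝ) (_ : 0 < r) (p : ℕ) (V : Set (Set (Euc n))),
      IsOpenPSubsets n p (ball (0 : Euc n) r) V ∧
      S = {c : ConfSp n | c.1 ∩ sphere (0 : Euc n) r = ∅ ∧ c.1 ∩ closedBall (0 : Euc n) r ∈ V}}

/-- The region `ℝᵏ × (0,1)ⁿ⁻ᵏ` inside `ℝⁿ`. -/
def BoxRegion (n k : ℕ) : Set (Euc n) :=
  {x | ∀ i : Fin n, k ≤ (i : ℕ) → x i ∈ Ioo (0 : ℝ) 1}

/-- The subspace `𝒞ⁿ'ᵏ` of `𝒞ⁿ` consisting of configurations contained in `ℝᵏ × (0,1)ⁿ⁻ᵏ`. -/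
def ConfSpk (n k : ℕ) : Type := {c : ConfSp n // c.1 ⊆ BoxRegion n k}

/-- The region `ℝᵏ × (0,a) × (0,1)ⁿ⁻ᵏ⁻¹` inside `ℝⁿ`. -/
def SlabRegion (n k : ℕ) (a : ℝ) : Set (Euc n) :=
  {x | (∀ i : Fin n, (i : ℕ) = k → x i ∈ Ioo 0 a) ∧
    ∀ i : Fin n, k < (i : ℕ) → x i ∈ Ioo (0 : ℝ) 1}

/-- The monoid space `ℳⁿ'ᵏ`: the subspace of `𝒞ⁿ × [0,∞)` of pairs `(c,a)` with
`c ⊆ ℝᵏ × (0,a) × (0,1)ⁿ⁻ᵏ⁻¹`. -/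
def Mon (n k : ℕ) : Type :=
  {q : ConfSp n × ℝ // 0 ≤ q.2 ∧ q.1.1 ⊆ SlabRegion n k q.2}
instance (n k : ℕ) : TopologicalSpace (ConfSpk n k) :=
  inferInstanceAs (TopologicalSpace {c : ConfSp n // c.1 ⊆ BoxRegion n k})

instance (n k : ℕ) : TopologicalSpace (Mon n k) :=
  inferInstanceAs (TopologicalSpace {q : ConfSp n × ℝ // 0 ≤ q.2 ∧ q.1.1 ⊆ SlabRegion n k q.2})
open ContinuousMap

/-- The map on path components induced by a continuous map. -/
def Pi0Map {X Y : Type*} [TopologicalSpace X] [TopologicalSpace Y] (f : C(X, Y)) :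
    ZerothHomotopy X → ZerothHomotopy Y :=
  Quotient.map f (fun a b (h : Joined a b) => show Joined (f a) (f b) from Nonempty.map (fun γ => γ.map f.continuous) h)

/-- The map on generalized loops (relative homotopy classes representatives) induced by
postcomposition with a continuous map. -/
def GenLoopMap {X Y : Type*} [TopologicalSpace X] [TopologicalSpace Y]
    (N : Type*) (f : C(X, Y)) (x : X) (p : GenLoop N X x) : GenLoop N Y (f x) :=
  ⟨f.comp p.1, fun y hy => by
    have h := p.2 y hy
    simp [ContinuousMap.comp_apply, h]⟩

/-- The map on homotopy groups induced by a continuous map. -/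
def HomotopyGroupMap {X Y : Type*} [TopologicalSpace X] [TopologicalSpace Y]
    (N : Type*) (f : C(X, Y)) (x : X) :
    HomotopyGroup N X x → HomotopyGroup N Y (f x) :=
  Quotient.map (GenLoopMap N f x)
    (fun _ _ h => Nonempty.map (fun H => H.compContinuousMap f) h)

/-- The subspace of `𝒞ⁿ` consisting of configurations with at most one point. -/
def AtMostOnePt (n : ℕ) : Type := {c : ConfSp n // c.1.Subsingleton}

instance (n : ℕ) : TopologicalSpace (AtMostOnePt n) :=
  inferInstanceAs (TopologicalSpace {c : ConfSp n // c.1.Subsingleton})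

/-- The inclusion of the subspace of configurations with at most one point into `𝒞ⁿ`. -/
def atMostOnePtIncl (n : ℕ) : C(AtMostOnePt n, ConfSp n) :=
  ⟨Subtype.val, continuous_subtype_val⟩

/-! ### Neighbourhoods in `𝒞ⁿ` -/

/-- A radius `ρ` can be enlarged slightly so that the closed ball gains no point of `c` and its
boundary sphere contains none. -/
lemma exists_good_radius {n : ℕ} (c : ConfSp n) (ρ b : ℝ) (hb : ρ < b) :
    ∃ r, ρ < r ∧ r < b ∧ (∀ x ∈ c.1, ‖x‖ ≤ r → ‖x‖ ≤ ρ) ∧ ∀ x ∈ c.1, ‖x‖ ≠ r := by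
  have h : ∀ᶠ r in nhdsWithin ρ (Ioi ρ), ∀ x ∈ c.1, ρ < ‖x‖ → r < ‖x‖ := by
    rw [Filter.eventually_all_finite c.2]
    intro x _
    by_cases hx : ρ < ‖x‖
    · filter_upwards [nhdsWithin_le_nhds (Iio_mem_nhds hx)] with r hr _ using hr
    · exact Filter.Eventually.of_forall fun r h => absurd h hx
  have hlt : ∀ᶠ r in nhdsWithin ρ (Ioi ρ), r < b := nhdsWithin_le_nhds (Iio_mem_nhds hb)
  have hgt : ∀ᶠ r in nhdsWithin ρ (Ioi ρ), ρ < r := self_mem_nhdsWithin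
  obtain ⟨r, h1, h2, h3⟩ := (h.and (hlt.and hgt)).exists
  refine ⟨r, h3, h2, fun x hx hxr => ?_, fun x hx hxr => ?_⟩
  · by_contra! hlt
    exact absurd (h1 x hx hlt) (not_lt.2 hxr)
  · exact absurd (h1 x hx (hxr ▸ h3)) (hxr ▸ lt_irrefl _)

/-- The points of a configuration in a closed ball, listed as an injective tuple. -/
lemma exists_enum {n : ℕ} (c : ConfSp n) (r : ℝ) :
    ∃ (p : ℕ) (g : Fin p → Euc n), Function.Injective g ∧ range g = c.1 ∩ closedBall 0 r := by
  have hfin : (c.1 ∩ closedBall (0 : Euc n) r).Finite := c.2.subset inter_subset_left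
  obtain ⟨p, g, hg⟩ := hfin.fin_embedding
  exact ⟨p, g, g.injective, hg⟩

/-- If `c` has no point on the sphere of radius `r`, then every nearby configuration has none
either, and its points inside that ball can be listed as a tuple close to a given listing `g` of
the points of `c` inside the ball. -/
lemma eventually_tuple {n p : ℕ} (c : ConfSp n) (r : ℝ) (hr : 0 < r)
    (hs : ∀ x ∈ c.1, ‖x‖ ≠ r) (g : Fin p → Euc n) (hg : Function.Injective g)
    (hgr : range g = c.1 ∩ closedBall 0 r) (P : (Fin p → Euc n) → Prop)
    (hP : ∀ᶠ g' in nhds g, P g') :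
    ∀ᶠ c' : ConfSp n in nhds c, (∀ x ∈ c'.1, ‖x‖ ≠ r) ∧ ∃ g' : Fin p → Euc n,
      P g' ∧ Function.Injective g' ∧ range g' = c'.1 ∩ closedBall 0 r := by
  obtain ⟨W, hWP, hWo, hgW⟩ := _root_.eventually_nhds_iff.1 hP
  -- The `p`-element sets that have some listing in `W`.
  let V : Set (Set (Euc n)) := {s | ∃ g' ∈ W, g' ∈ InjTup n p (ball 0 r) ∧ range g' = s}
  have hV : IsOpenPSubsets n p (ball 0 r) V := by
    refine ⟨?_, ?_⟩
    · rintro s ⟨g', -, ⟨hi, hb⟩, rfl⟩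
      refine ⟨by rintro _ ⟨i, rfl⟩; exact hb i, ?_⟩
      rw [← Set.image_univ, Set.ncard_image_of_injective _ hi, Set.ncard_univ, Nat.card_fin]
    · have : {f : InjTup n p (ball (0 : Euc n) r) | range (f : Fin p → Euc n) ∈ V} =
          ⋃ σ : Equiv.Perm (Fin p),
            {f : InjTup n p (ball (0 : Euc n) r) | (f : Fin p → Euc n) ∘ σ ∈ W} := by
        ext ⟨f, hf⟩
        simp only [mem_ofPred_eq, mem_iUnion]
        constructor
        · rintro ⟨g', hW, ⟨hi, hb⟩, hrange⟩
          have hex : ∀ i, ∃ j, f j = g' i := fun i => by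
            have : g' i ∈ range f := hrange ▸ mem_range_self i
            exact this
          choose τ hτ using hex
          have hτi : Function.Injective τ := fun i j hij => hi (by rw [← hτ, ← hτ, hij])
          refine ⟨Equiv.ofBijective τ (Finite.injective_iff_bijective.1 hτi), ?_⟩
          have : f ∘ (Equiv.ofBijective τ (Finite.injective_iff_bijective.1 hτi)) = g' := by
            ext1 i; exact hτ i
          rw [this]; exact hW
        · rintro ⟨σ, hσ⟩
          exact ⟨f ∘ σ, hσ, ⟨hf.1.comp σ.injective, fun i => hf.2 _⟩,
            σ.surjective.range_comp f⟩
      rw [this]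
      refine isOpen_iUnion fun σ => hWo.preimage ?_
      exact continuous_pi fun i => (continuous_apply (σ i)).comp continuous_subtype_val
  have hopen : IsOpen {c : ConfSp n | c.1 ∩ sphere (0 : Euc n) r = ∅ ∧
      c.1 ∩ closedBall (0 : Euc n) r ∈ V} :=
    TopologicalSpace.isOpen_generateFrom_of_mem ⟨r, hr, p, V, hV, rfl⟩
  have hmem : c ∈ {c : ConfSp n | c.1 ∩ sphere (0 : Euc n) r = ∅ ∧
      c.1 ∩ closedBall (0 : Euc n) r ∈ V} := by
    refine ⟨?_, g, hgW, ⟨hg, fun i => ?_⟩, hgr⟩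
    · ext x
      simp only [mem_inter_iff, mem_sphere_zero_iff_norm, mem_empty_iff_false, iff_false, not_and]
      exact hs x
    · have : g i ∈ c.1 ∩ closedBall 0 r := hgr ▸ mem_range_self i
      rw [mem_ball_zero_iff]
      exact lt_of_le_of_ne (mem_closedBall_zero_iff.1 this.2) (hs _ this.1)
  filter_upwards [hopen.mem_nhds hmem] with c' hc'
  obtain ⟨h1, g', hW, hi, hrange⟩ := hc'
  refine ⟨fun x hx hxr => ?_, g', hWP _ hW, hi.1, hrange⟩
  have : x ∈ c'.1 ∩ sphere (0 : Euc n) r := ⟨hx, mem_sphere_zero_iff_norm.2 hxr⟩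
  rw [h1] at this
  exact this

/-! ### The inverse norm of the second closest point -/

/-- The numbers `1 / max ‖x‖ ‖y‖`, for pairs of distinct points `x`, `y` of `c`, together
with `0`. -/
def invDistSet {n : ℕ} (c : ConfSp n) : Set ℝ :=
  insert 0 ((fun q : Euc n × Euc n => (max ‖q.1‖ ‖q.2‖)⁻¹) '' {q | q ∈ c.1 ×ˢ c.1 ∧ q.1 ≠ q.2})

/-- The inverse of the norm of the second closest point of `c` to the origin, with value `0` when
`c` has at most one point. -/
def invDist2 {n : ℕ} (c : ConfSp n) : ℝ := sSup (invDistSet c)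

lemma invDistSet_finite {n : ℕ} (c : ConfSp n) : (invDistSet c).Finite :=
  (((c.2.prod c.2).subset fun _ h => h.1).image _).insert 0

lemma le_invDist2 {n : ℕ} {c : ConfSp n} {v : ℝ} (hv : v ∈ invDistSet c) : v ≤ invDist2 c :=
  le_csSup (invDistSet_finite c).bddAbove hv

lemma invDist2_nonneg {n : ℕ} (c : ConfSp n) : 0 ≤ invDist2 c :=
  le_invDist2 (mem_insert _ _)

lemma le_invDist2_of_ne {n : ℕ} {c : ConfSp n} {x y : Euc n} (hx : x ∈ c.1) (hy : y ∈ c.1)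
    (hxy : x ≠ y) : (max ‖x‖ ‖y‖)⁻¹ ≤ invDist2 c :=
  le_invDist2 (mem_insert_of_mem _ ⟨(x, y), ⟨⟨hx, hy⟩, hxy⟩, rfl⟩)

lemma invDist2_mem {n : ℕ} (c : ConfSp n) : invDist2 c ∈ invDistSet c :=
  Set.Nonempty.csSup_mem ⟨0, mem_insert _ _⟩ (invDistSet_finite c)

lemma invDist2_cases {n : ℕ} (c : ConfSp n) : invDist2 c = 0 ∨
    ∃ x ∈ c.1, ∃ y ∈ c.1, x ≠ y ∧ invDist2 c = (max ‖x‖ ‖y‖)⁻¹ := by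
  rcases invDist2_mem c with h | ⟨⟨x, y⟩, ⟨⟨hx, hy⟩, hxy⟩, h⟩
  · exact Or.inl h
  · exact Or.inr ⟨x, hx, y, hy, hxy, h.symm⟩

lemma invDist2_of_subsingleton {n : ℕ} {c : ConfSp n} (hc : c.1.Subsingleton) :
    invDist2 c = 0 := by
  rcases invDist2_cases c with h | ⟨x, hx, y, hy, hxy, -⟩
  · exact h
  · exact absurd (hc hx hy) hxy

lemma max_norm_pos {n : ℕ} {x y : Euc n} (hxy : x ≠ y) : 0 < max ‖x‖ ‖y‖ := by
  by_contra! h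
  have hx : x = 0 := norm_le_zero_iff.1 ((le_max_left _ _).trans h)
  have hy : y = 0 := norm_le_zero_iff.1 ((le_max_right _ _).trans h)
  exact hxy (hx.trans hy.symm)

lemma continuous_invDist2 (n : ℕ) : Continuous (invDist2 : ConfSp n → ℝ) := by
  rw [continuous_iff_continuousAt]
  intro c
  refine tendsto_order.2 ⟨fun a ha => ?_, fun a ha => ?_⟩
  · rcases lt_or_ge a 0 with h0 | h0
    · exact Filter.Eventually.of_forall fun c' => h0.trans_le (invDist2_nonneg c')
    -- Two points within `1 / a`: they stay inside a ball of radius `r` with `a < 1 / r`.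
    rcases invDist2_cases c with h | ⟨x, hx, y, hy, hxy, h⟩
    · exact absurd (h ▸ ha) (not_lt.2 h0)
    have hm := max_norm_pos hxy
    obtain ⟨b, hb, hab⟩ : ∃ b, max ‖x‖ ‖y‖ < b ∧ ∀ r, 0 < r → r < b → a < r⁻¹ := by
      rcases h0.eq_or_lt with rfl | h0
      · exact ⟨_, lt_add_one _, fun r hr _ => inv_pos.2 hr⟩
      · exact ⟨a⁻¹, (lt_inv_comm₀ h0 hm).1 (h ▸ ha), fun r hr hra => (lt_inv_comm₀ hr h0).1 hra⟩
    obtain ⟨r, hr1, hr2, -, hr4⟩ := exists_good_radius c _ b hb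
    have hr0 := hm.trans hr1
    obtain ⟨p, g, hg, hgr⟩ := exists_enum c r
    have hxr : x ∈ range g := hgr ▸
      ⟨hx, mem_closedBall_zero_iff.2 ((le_max_left _ _).trans hr1.le)⟩
    have hyr : y ∈ range g := hgr ▸
      ⟨hy, mem_closedBall_zero_iff.2 ((le_max_right _ _).trans hr1.le)⟩
    obtain ⟨i, rfl⟩ := hxr
    obtain ⟨j, rfl⟩ := hyr
    filter_upwards [eventually_tuple c r hr0 hr4 g hg hgr (fun _ => True)
      (Filter.Eventually.of_forall fun _ => trivial)] with c' hc'
    obtain ⟨-, g', -, hi', hr'⟩ := hc'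
    have h1 : g' i ∈ c'.1 ∩ closedBall 0 r := hr' ▸ mem_range_self i
    have h2 : g' j ∈ c'.1 ∩ closedBall 0 r := hr' ▸ mem_range_self j
    have hne : g' i ≠ g' j := fun h => hxy (congrArg g (hi' h))
    refine (hab r hr0 hr2).trans_le (le_trans ?_ (le_invDist2_of_ne h1.1 h2.1 hne))
    exact inv_anti₀ (max_norm_pos hne)
      (max_le (mem_closedBall_zero_iff.1 h1.2) (mem_closedBall_zero_iff.1 h2.2))
  · -- At most one point within `1 / a`: this persists in a ball of radius `r > 1 / a`.
    have ha0 : 0 < a := (invDist2_nonneg c).trans_lt ha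
    obtain ⟨r, hr1, -, hr3, hr4⟩ := exists_good_radius c a⁻¹ _ (lt_add_one _)
    have hr0 : 0 < r := (inv_pos.2 ha0).trans hr1
    obtain ⟨p, g, hg, hgr⟩ := exists_enum c r
    have hsub : ∀ i j : Fin p, i = j := by
      intro i j
      by_contra hij
      have h1 : g i ∈ c.1 ∩ closedBall 0 r := hgr ▸ mem_range_self i
      have h2 : g j ∈ c.1 ∩ closedBall 0 r := hgr ▸ mem_range_self j
      have hne : g i ≠ g j := fun h => hij (hg h)
      have h3 := hr3 _ h1.1 (mem_closedBall_zero_iff.1 h1.2)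
      have h4 := hr3 _ h2.1 (mem_closedBall_zero_iff.1 h2.2)
      have h5 : a ≤ (max ‖g i‖ ‖g j‖)⁻¹ :=
        (le_inv_comm₀ ha0 (max_norm_pos hne)).2 (max_le h3 h4)
      exact absurd (h5.trans (le_invDist2_of_ne h1.1 h2.1 hne)) (not_le.2 ha)
    filter_upwards [eventually_tuple c r hr0 hr4 g hg hgr (fun _ => True)
      (Filter.Eventually.of_forall fun _ => trivial)] with c' hc'
    obtain ⟨-, g', -, hi', hr'⟩ := hc'
    rcases invDist2_cases c' with h | ⟨x, hx, y, hy, hxy, h⟩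
    · rwa [h]
    rw [h]
    refine (inv_lt_comm₀ (max_norm_pos hxy) ha0).2 (hr1.trans ?_)
    by_contra! hle
    have hxr : x ∈ range g' := hr' ▸
      ⟨hx, mem_closedBall_zero_iff.2 ((le_max_left _ _).trans hle)⟩
    have hyr : y ∈ range g' := hr' ▸
      ⟨hy, mem_closedBall_zero_iff.2 ((le_max_right _ _).trans hle)⟩
    obtain ⟨i, rfl⟩ := hxr
    obtain ⟨j, rfl⟩ := hyr
    exact hxy (congrArg g' (hsub i j))

/-! ### Radial expansion -/

/-- The radial homeomorphism `y ↦ y / (1 + s‖y‖)` from `ℝⁿ` onto the ball of radius `1 / s`. -/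
def shrink {n : ℕ} (s : NNReal) (y : Euc n) : Euc n := (1 + s * ‖y‖)⁻¹ • y

lemma norm_shrink {n : ℕ} (s : NNReal) (y : Euc n) :
    ‖shrink s y‖ = ‖y‖ / (1 + s * ‖y‖) := by
  have : 0 ≤ 1 + (s : ℝ) * ‖y‖ := by positivity
  rw [shrink, norm_smul, norm_inv, Real.norm_of_nonneg this, inv_mul_eq_div]

lemma shrink_denom {n : ℕ} (s : NNReal) (y : Euc n) :
    1 - s * ‖shrink s y‖ = (1 + s * ‖y‖)⁻¹ := by
  have : 0 < 1 + (s : ℝ) * ‖y‖ := by positivity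
  rw [norm_shrink]
  field_simp
  ring

lemma shrink_norm_lt {n : ℕ} (s : NNReal) (y : Euc n) : s * ‖shrink s y‖ < 1 := by
  have h := shrink_denom s y
  have : 0 < (1 + (s : ℝ) * ‖y‖)⁻¹ := by positivity
  linarith

/-- The inverse `x ↦ x / (1 - s‖x‖)` of `shrink s`, meaningful for `s‖x‖ < 1`. -/
def stretch {n : ℕ} (s : NNReal) (x : Euc n) : Euc n := (1 - s * ‖x‖)⁻¹ • x

lemma stretch_shrink {n : ℕ} (s : NNReal) (y : Euc n) : stretch s (shrink s y) = y := by
  have : 0 < 1 + (s : ℝ) * ‖y‖ := by positivity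
  rw [stretch, shrink_denom, shrink, inv_inv, smul_smul, mul_inv_cancel₀ this.ne', one_smul]

lemma shrink_stretch {n : ℕ} (s : NNReal) (x : Euc n) (hx : s * ‖x‖ < 1) :
    shrink s (stretch s x) = x := by
  have h : 0 < 1 - (s : ℝ) * ‖x‖ := by linarith
  have h2 : ‖stretch s x‖ = ‖x‖ / (1 - s * ‖x‖) := by
    rw [stretch, norm_smul, norm_inv, Real.norm_of_nonneg h.le, inv_mul_eq_div]
  have h3 : 1 + (s : ℝ) * ‖stretch s x‖ = (1 - s * ‖x‖)⁻¹ := by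
    rw [h2]
    field_simp
    ring
  rw [shrink, h3, stretch, inv_inv, smul_smul, mul_inv_cancel₀ h.ne', one_smul]

lemma shrink_injective {n : ℕ} (s : NNReal) : Function.Injective (shrink s : Euc n → Euc n) :=
  Function.LeftInverse.injective (stretch_shrink s)

lemma div_lt_div_iff_shrink (s : NNReal) {a b : ℝ} (ha : 0 ≤ a) (hb : 0 ≤ b) :
    a / (1 + s * a) < b / (1 + s * b) ↔ a < b := by
  have h1 : 0 < 1 + (s : ℝ) * a := by positivity
  have h2 : 0 < 1 + (s : ℝ) * b := by positivity
  rw [div_lt_div_iff₀ h1 h2]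
  constructor <;> intro h <;> nlinarith

/-- The configuration obtained from `c` by the radial expansion inverse to `shrink s`; the points
of norm at least `1 / s` are removed. -/
def expand {n : ℕ} (s : NNReal) (c : ConfSp n) : ConfSp n :=
  ⟨shrink s ⁻¹' c.1, c.2.preimage (shrink_injective s).injOn⟩

lemma mem_expand {n : ℕ} (s : NNReal) (c : ConfSp n) (y : Euc n) :
    y ∈ (expand s c).1 ↔ shrink s y ∈ c.1 := Iff.rfl

lemma expand_zero {n : ℕ} (c : ConfSp n) : expand 0 c = c := by
  apply Subtype.ext
  ext y
  rw [mem_expand]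
  simp [shrink]

lemma continuousAt_stretch_tuple {n p : ℕ} (s : NNReal) (g : Fin p → Euc n)
    (hg : ∀ i, s * ‖g i‖ < 1) :
    ContinuousAt (fun q : NNReal × (Fin p → Euc n) => fun i => stretch q.1 (q.2 i)) (s, g) := by
  refine continuousAt_pi.2 fun i => ?_
  have h2 : ContinuousAt (fun q : NNReal × (Fin p → Euc n) => q.2 i) (s, g) := by fun_prop
  have h1 : ContinuousAt (fun q : NNReal × (Fin p → Euc n) => 1 - (q.1 : ℝ) * ‖q.2 i‖) (s, g) := by
    fun_prop
  exact (h1.inv₀ (by have := hg i; simp only; linarith)).smul h2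

/-- Radial expansion is jointly continuous in the parameter and the configuration. -/
lemma continuous_expand (n : ℕ) :
    Continuous (fun q : NNReal × ConfSp n => expand q.1 q.2) := by
  rw [continuous_iff_continuousAt]
  rintro ⟨s, c⟩
  refine TopologicalSpace.tendsto_nhds_generateFrom_iff.2 ?_
  rintro _ ⟨r, hr, p, V, ⟨hV1, hV2⟩, rfl⟩ ⟨hsph, hball⟩
  -- `shrink s` maps the sphere of radius `r` onto the sphere of radius `ρ s`.
  let ρ : NNReal → ℝ := fun s => r / (1 + s * r)
  have hρpos : ∀ s, 0 < ρ s := fun s => by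
    have : 0 < 1 + (s : ℝ) * r := by positivity
    exact div_pos hr this
  have hρs : ∀ s, s * ρ s < 1 := fun s => by
    have : 0 < 1 + (s : ℝ) * r := by positivity
    simp only [ρ]
    rw [← mul_div_assoc, div_lt_one this]
    linarith
  have hρcont : ContinuousAt ρ s := by
    have : 1 + (s : ℝ) * r ≠ 0 := by positivity
    exact ContinuousAt.div (by fun_prop) (by fun_prop) this
  have hlt : ∀ (s : NNReal) (y : Euc n), ‖shrink s y‖ < ρ s ↔ ‖y‖ < r := fun s y => by
    rw [norm_shrink]
    exact div_lt_div_iff_shrink s (norm_nonneg _) hr.le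
  have hgt : ∀ (s : NNReal) (y : Euc n), ρ s < ‖shrink s y‖ ↔ r < ‖y‖ := fun s y => by
    rw [norm_shrink]
    exact div_lt_div_iff_shrink s hr.le (norm_nonneg _)
  obtain ⟨r', hr'1, -, hr'3, hr'4⟩ := exists_good_radius c (ρ s) _ (lt_add_one _)
  obtain ⟨m, g, hg, hgr⟩ := exists_enum c r'
  have hmem : ∀ i, g i ∈ c.1 ∧ ‖g i‖ ≤ ρ s := fun i => by
    have : g i ∈ c.1 ∩ closedBall 0 r' := hgr ▸ mem_range_self i
    exact ⟨this.1, hr'3 _ this.1 (mem_closedBall_zero_iff.1 this.2)⟩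
  have hslt : ∀ (s : NNReal) (x : Euc n), ‖x‖ ≤ ρ s → s * ‖x‖ < 1 := fun s x hx =>
    (mul_le_mul_of_nonneg_left hx s.2).trans_lt (hρs s)
  have hgρ : ∀ i, ‖g i‖ < ρ s := by
    intro i
    refine lt_of_le_of_ne (hmem i).2 fun heq => ?_
    have hs1 := shrink_stretch s (g i) (hslt s _ (hmem i).2)
    have h1 : ¬ ‖stretch s (g i)‖ < r := by rw [← hlt s, hs1, heq]; exact lt_irrefl _
    have h2 : ¬ r < ‖stretch s (g i)‖ := by rw [← hgt s, hs1, heq]; exact lt_irrefl _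
    have : stretch s (g i) ∈ (expand s c).1 ∩ sphere 0 r := by
      refine ⟨?_, mem_sphere_zero_iff_norm.2 (le_antisymm (not_lt.1 h2) (not_lt.1 h1))⟩
      rw [mem_expand, hs1]
      exact (hmem i).1
    rw [hsph] at this
    exact this
  -- A listing of the points of `c` in the ball of radius `r'` is stretched to a listing of the
  -- points of the expanded configuration in the ball of radius `r`.
  have key : ∀ (s' : NNReal) (c' : ConfSp n) (g' : Fin m → Euc n), ρ s' < r' →
      (∀ i, ‖g' i‖ < ρ s') → range g' = c'.1 ∩ closedBall 0 r' →
      (expand s' c').1 ∩ sphere 0 r = ∅ ∧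
      (expand s' c').1 ∩ closedBall 0 r = range (fun i => stretch s' (g' i)) := by
    intro s' c' g' hs' hg' hrange
    have hof : ∀ y ∈ (expand s' c').1, ‖y‖ ≤ r → ∃ i, g' i = shrink s' y := by
      intro y hy hyr
      have h1 : ‖shrink s' y‖ ≤ ρ s' := not_lt.1 fun h => absurd ((hgt s' y).1 h) (not_lt.2 hyr)
      have : shrink s' y ∈ range g' := by
        rw [hrange]
        exact ⟨hy, mem_closedBall_zero_iff.2 (h1.trans hs'.le)⟩
      exact this
    constructor
    · ext y
      simp only [mem_inter_iff, mem_sphere_zero_iff_norm, mem_empty_iff_false, iff_false, not_and]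
      intro hy hyr
      obtain ⟨i, hi⟩ := hof y hy hyr.le
      have := hg' i
      rw [hi, hlt] at this
      exact this.ne hyr
    · ext y
      constructor
      · rintro ⟨hy, hyr⟩
        obtain ⟨i, hi⟩ := hof y hy (mem_closedBall_zero_iff.1 hyr)
        exact ⟨i, by simp only [hi, stretch_shrink]⟩
      · rintro ⟨i, rfl⟩
        have hi := shrink_stretch s' (g' i) (hslt s' _ (hg' i).le)
        have h1 : g' i ∈ c'.1 ∩ closedBall 0 r' := hrange ▸ mem_range_self i
        refine ⟨by rw [mem_expand, hi]; exact h1.1, mem_closedBall_zero_iff.2 ?_⟩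
        exact ((hlt s' _).1 (hi.symm ▸ hg' i)).le
  have hinj : ∀ (s' : NNReal) (g' : Fin m → Euc n), Function.Injective g' →
      (∀ i, ‖g' i‖ < ρ s') → (fun i => stretch s' (g' i)) ∈ InjTup n m (ball 0 r) := by
    intro s' g' hi hg'
    refine ⟨fun i j hij => hi ?_, fun i => ?_⟩
    · rw [← shrink_stretch s' (g' i) (hslt s' _ (hg' i).le),
        ← shrink_stretch s' (g' j) (hslt s' _ (hg' j).le)]
      exact congrArg _ hij
    · rw [mem_ball_zero_iff, ← hlt s', shrink_stretch s' (g' i) (hslt s' _ (hg' i).le)]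
      exact hg' i
  have h0 := key s c g hr'1 hgρ hgr
  have hinj0 := hinj s g hg hgρ
  obtain rfl : m = p := by
    rw [← (hV1 _ hball).2, h0.2, ← Set.image_univ,
      Set.ncard_image_of_injective _ hinj0.1, Set.ncard_univ, Nat.card_fin]
  obtain ⟨O, hO, hOV⟩ := isOpen_induced_iff.1 hV2
  have hOmem : ∀ f (hf : f ∈ InjTup n m (ball 0 r)), f ∈ O ↔ range f ∈ V := fun f hf =>
    Set.ext_iff.1 hOV ⟨f, hf⟩
  have hev : ∀ᶠ q : NNReal × (Fin m → Euc n) in nhds (s, g),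
      ρ q.1 < r' ∧ (∀ i, ‖q.2 i‖ < ρ q.1) ∧ (fun i => stretch q.1 (q.2 i)) ∈ O := by
    have hρ1 : ContinuousAt (fun q : NNReal × (Fin m → Euc n) => ρ q.1) (s, g) :=
      ContinuousAt.comp (g := ρ) (f := Prod.fst) hρcont continuousAt_fst
    refine (hρ1.eventually_lt continuousAt_const hr'1).and (Filter.Eventually.and ?_ ?_)
    · refine Filter.eventually_all.2 fun i => ?_
      exact ContinuousAt.eventually_lt (by fun_prop) hρ1 (hgρ i)
    · refine (continuousAt_stretch_tuple s g fun i => hslt s _ (hgρ i).le).eventually_mem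
        (hO.mem_nhds ((hOmem _ hinj0).2 ?_))
      rw [← h0.2]
      exact hball
  rw [nhds_prod_eq] at hev
  obtain ⟨A, hA, P, hP, hAP⟩ := Filter.eventually_prod_iff.1 hev
  have hr'0 : 0 < r' := (hρpos s).trans hr'1
  have := hA.prod_nhds (eventually_tuple c r' hr'0 hr'4 g hg hgr P hP)
  filter_upwards [this] with q hq
  obtain ⟨s', c'⟩ := q
  obtain ⟨hs', -, g', hPg', hig', hrg'⟩ := hq
  obtain ⟨e1, e2, e3⟩ := hAP hs' hPg'
  have hk := key s' c' g' e1 e2 hrg'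
  refine ⟨hk.1, ?_⟩
  simp only [hk.2]
  exact (hOmem _ (hinj s' g' hig' e2)).1 e3

/-! ### The deformation retraction -/

/-- The homotopy `(t, c) ↦ expand (t * invDist2 c) c`. -/
def defHomotopy (n : ℕ) (q : unitInterval × ConfSp n) : ConfSp n :=
  expand (Real.toNNReal (q.1 * invDist2 q.2)) q.2

lemma continuous_defHomotopy (n : ℕ) : Continuous (defHomotopy n) := by
  have h := (continuous_invDist2 n).comp (continuous_snd (X := unitInterval))
  have h1 : Continuous fun q : unitInterval × ConfSp n => (q.1 : ℝ) * invDist2 q.2 :=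
    (continuous_subtype_val.comp continuous_fst).mul h
  exact (continuous_expand n).comp ((continuous_real_toNNReal.comp h1).prodMk continuous_snd)

lemma defHomotopy_zero {n : ℕ} (c : ConfSp n) : defHomotopy n (0, c) = c := by
  simp [defHomotopy, expand_zero]

lemma defHomotopy_of_subsingleton {n : ℕ} (t : unitInterval) {c : ConfSp n}
    (hc : c.1.Subsingleton) : defHomotopy n (t, c) = c := by
  simp [defHomotopy, invDist2_of_subsingleton hc, expand_zero]

/-- At time `1` only the points closer to the origin than the second closest one survive. -/
lemma defHomotopy_one_subsingleton {n : ℕ} (c : ConfSp n) :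
    (defHomotopy n (1, c)).1.Subsingleton := by
  intro x hx y hy
  by_contra hxy
  have hu : ((Real.toNNReal ((1 : unitInterval) * invDist2 c) : NNReal) : ℝ) = invDist2 c := by
    simp [invDist2_nonneg]
  set s := Real.toNNReal ((1 : unitInterval) * invDist2 c)
  have hne : shrink s x ≠ shrink s y := fun h => hxy (shrink_injective s h)
  have h1 := shrink_norm_lt s x
  have h2 := shrink_norm_lt s y
  have h3 : (max ‖shrink s x‖ ‖shrink s y‖)⁻¹ ≤ invDist2 c := le_invDist2_of_ne hx hy hne
  have hm := max_norm_pos hne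
  rw [← hu, inv_le_iff_one_le_mul₀ hm] at h3
  rcases max_choice ‖shrink s x‖ ‖shrink s y‖ with h | h <;> rw [h] at h3 <;> linarith

/-- The retraction of `𝒞ⁿ` onto the configurations with at most one point. -/
def retr (n : ℕ) : C(ConfSp n, AtMostOnePt n) :=
  ⟨fun c => ⟨defHomotopy n (1, c), defHomotopy_one_subsingleton c⟩,
    Continuous.subtype_mk ((continuous_defHomotopy n).comp (by fun_prop)) _⟩

lemma retr_incl {n : ℕ} (a : AtMostOnePt n) : retr n (atMostOnePtIncl n a) = a :=
  Subtype.ext (defHomotopy_of_subsingleton 1 a.2)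


/-- For every `n ≥ 1`, the inclusion into `𝒞ⁿ` of the subspace of configurations with at
most one point is a weak homotopy equivalence: it induces a bijection on path components
and isomorphisms on all homotopy groups `πᵢ` (`i ≥ 1`) at every basepoint in the
subspace. -/
theorem statement0 (n : ℕ) (hn : 1 ≤ n) :
    Function.Bijective (Pi0Map (atMostOnePtIncl n)) ∧
      ∀ i : ℕ, 1 ≤ i → ∀ x : AtMostOnePt n,
        Function.Bijective (HomotopyGroupMap (Fin i) (atMostOnePtIncl n) x) := by
  refine ⟨⟨?_, ?_⟩, fun i _ x => ⟨?_, ?_⟩⟩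
  · rintro ⟨a⟩ ⟨b⟩ hab
    obtain ⟨γ⟩ : Joined (atMostOnePtIncl n a) (atMostOnePtIncl n b) := Quotient.exact hab
    refine Quotient.sound ⟨?_⟩
    exact (γ.map (retr n).continuous).cast (retr_incl a).symm (retr_incl b).symm
  · rintro ⟨c⟩
    refine ⟨Quotient.mk _ (retr n c), Quotient.sound (Joined.symm ⟨?_⟩)⟩
    exact
      { toFun := fun t => defHomotopy n (t, c)
        continuous_toFun := (continuous_defHomotopy n).comp (by fun_prop)
        source' := defHomotopy_zero c
        target' := rfl }
  · rintro ⟨p⟩ ⟨q⟩ hpq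
    obtain ⟨H⟩ : GenLoop.Homotopic (GenLoopMap (Fin i) (atMostOnePtIncl n) x p)
        (GenLoopMap (Fin i) (atMostOnePtIncl n) x q) := Quotient.exact hpq
    refine Quotient.sound ⟨(H.compContinuousMap (retr n)).cast ?_ ?_⟩
    · ext1 y
      exact retr_incl (p.1 y)
    · ext1 y
      exact retr_incl (q.1 y)
  · rintro ⟨p⟩
    have hq : ∀ y ∈ Cube.boundary (Fin i), (retr n).comp p.1 y = x := fun y hy => by
      have h : p.1 y = atMostOnePtIncl n x := p.2 y hy
      rw [ContinuousMap.comp_apply, h, retr_incl]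
    refine ⟨Quotient.mk _ ⟨(retr n).comp p.1, hq⟩, Quotient.sound (Setoid.symm ?_)⟩
    -- The loop is deformed pointwise; the homotopy is constant on the boundary of the cube
    -- because the basepoint has at most one point.
    refine ⟨⟨⟨⟨fun z => defHomotopy n (z.1, p.1 z.2), (continuous_defHomotopy n).comp
      (by fun_prop)⟩, fun y => defHomotopy_zero _, fun y => rfl⟩, fun t y hy => ?_⟩⟩
    have h : p.1 y = atMostOnePtIncl n x := p.2 y hy
    change defHomotopy n (t, p.1 y) = p.1 y
    rw [h]
    exact defHomotopy_of_subsingleton t x.2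
end
end

section
/- For every integer n ≥ 1, the subspace of 𝒞ⁿ consisting of configurations with at most one point, with the subspace topology, is homeomorphic to the one-point compactification ℝⁿ ∪ {∞} of ℝⁿ, via the map sending a singleton {x} to x and the empty configuration to the point ∞. -/
/-!
The inverse of the required homeomorphism is the bijection `x ↦ {x}`, `∞ ↦ ∅` from the compact
space `ℝⁿ ∪ {∞}`. A continuous bijection from a compact space to a Hausdorff space is a
homeomorphism, so two facts remain.

* Continuity (`continuous_ofOnePoint`): the preimage of a basic set `C(B, V)` meets `ℝⁿ` in the
  points `x` of the open ball with `{x} ∈ V`, an open set, together with the complement of `B` in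
  case `∅ ∈ V`. If it contains `∞`, then `∅ ∈ V`, so `V` consists of `0`-element sets, `V = {∅}`,
  and the preimage is the complement of the compact set `B`.
* Separation (`instT2SpaceAtMostOnePt`): `∅` and `{x}` are separated by "no point in `B`" and
  "exactly one point in `B`, off `∂B`" for a ball `B` whose interior contains `x`; `{x}` and `{y}`
  are separated by "the point in `B` lies in `W`", for disjoint open sets `W` around `x` and `y`.
-/

open Metric Set

noncomputable section

/-- The singleton configuration of a point of `ℝⁿ`, and the empty configuration for `∞`. -/
def ofOnePoint (n : ℕ) : OnePoint (Euc n) → AtMostOnePt n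
  | OnePoint.infty => ⟨⟨∅, Set.finite_empty⟩, Set.subsingleton_empty⟩
  | OnePoint.some x => ⟨⟨{x}, Set.finite_singleton x⟩, Set.subsingleton_singleton⟩

lemma ofOnePoint_bijective (n : ℕ) : Function.Bijective (ofOnePoint n) := by
  constructor
  · intro a b h
    have h' : (ofOnePoint n a).1.1 = (ofOnePoint n b).1.1 := by rw [h]
    induction a using OnePoint.rec with
    | infty =>
      induction b using OnePoint.rec with
      | infty => rfl
      | coe y => exact absurd h'.symm (Set.singleton_ne_empty y)
    | coe x =>
      induction b using OnePoint.rec with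
      | infty => exact absurd h' (Set.singleton_ne_empty x)
      | coe y => exact congrArg _ (Set.singleton_injective h')
  · rintro ⟨⟨c, hc⟩, hs⟩
    rcases Set.Subsingleton.eq_empty_or_singleton hs with h | ⟨x, h⟩
    · exact ⟨OnePoint.infty, Subtype.ext (Subtype.ext h.symm)⟩
    · exact ⟨OnePoint.some x, Subtype.ext (Subtype.ext h.symm)⟩

lemma isOpen_setOf_singleton_mem {n p : ℕ} {r : ℝ} {V : Set (Set (Euc n))}
    (hV : IsOpenPSubsets n p (ball (0 : Euc n) r) V) : IsOpen {x : Euc n | {x} ∈ V} := by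
  rcases Set.eq_empty_or_nonempty {x : Euc n | {x} ∈ V} with h | ⟨x₀, h₀⟩
  · rw [h]; exact isOpen_empty
  · obtain rfl : 1 = p := by simpa using (hV.1 _ h₀).2
    let F : ball (0 : Euc n) r → InjTup n 1 (ball (0 : Euc n) r) :=
      fun x => ⟨fun _ => x.1, Function.injective_of_subsingleton _, fun _ => x.2⟩
    have hF : Continuous F :=
      Continuous.subtype_mk (continuous_pi fun _ => continuous_subtype_val) _
    have h2 := isOpen_ball.isOpenMap_subtype_val _ (hV.2.preimage hF)
    refine (congrArg IsOpen (Set.ext fun x => ?_)).mpr h2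
    constructor
    · intro hx
      refine ⟨⟨x, (hV.1 _ hx).1 rfl⟩, ?_, rfl⟩
      simpa [F] using hx
    · rintro ⟨y, hy, rfl⟩
      simpa [F] using hy

lemma continuous_ofOnePoint (n : ℕ) : Continuous (ofOnePoint n) := by
  refine Continuous.subtype_mk (f := fun a => (ofOnePoint n a).1) ?_ fun a => (ofOnePoint n a).2
  refine continuous_generateFrom_iff.2 ?_
  rintro S ⟨r, hr, p, V, hV, rfl⟩
  -- The trace of the preimage on `ℝⁿ`: inside the ball, or outside it when `∅ ∈ V`.
  have key : ∀ x : Euc n, (({x} : Set (Euc n)) ∩ sphere 0 r = ∅ ∧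
      ({x} : Set (Euc n)) ∩ closedBall 0 r ∈ V) ↔
      {x} ∈ V ∨ (x ∉ closedBall (0 : Euc n) r ∧ ∅ ∈ V) := by
    intro x
    by_cases hx : x ∈ closedBall (0 : Euc n) r
    · have h1 : ({x} : Set (Euc n)) ∩ closedBall 0 r = {x} := by simpa using hx
      rw [h1]
      simp only [hx, not_true_eq_false, false_and, or_false, and_iff_right_iff_imp]
      intro h
      have : x ∈ ball (0 : Euc n) r := (hV.1 _ h).1 rfl
      simp only [mem_ball, dist_zero_right] at this
      simpa using this.ne
    · have h1 : ({x} : Set (Euc n)) ∩ closedBall 0 r = ∅ := by simpa using hx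
      have h2 : ({x} : Set (Euc n)) ∩ sphere 0 r = ∅ :=
        Set.subset_empty_iff.1 (h1 ▸ Set.inter_subset_inter_right _ sphere_subset_closedBall)
      rw [h1, h2]
      simp only [hx, not_false_eq_true, true_and, iff_or_self]
      intro h
      exact absurd (ball_subset_closedBall ((hV.1 _ h).1 rfl)) hx
  rw [OnePoint.isOpen_def]
  constructor
  · intro hinf
    have h0 : (∅ : Set (Euc n)) ∈ V := by
      have := hinf.2
      change (∅ : Set (Euc n)) ∩ _ ∈ V at this
      simpa using this
    obtain rfl : 0 = p := by simpa using (hV.1 _ h0).2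
    refine (congrArg IsCompact (Set.ext fun x => ?_)).mpr (isCompact_closedBall (0 : Euc n) r)
    have hx : ({x} : Set (Euc n)) ∉ V := fun h => by simpa using (hV.1 _ h).2
    have := key x
    change ¬ (({x} : Set (Euc n)) ∩ sphere 0 r = ∅ ∧ ({x} : Set (Euc n)) ∩ closedBall 0 r ∈ V) ↔ _
    rw [this]
    tauto
  · have : IsOpen ({x : Euc n | {x} ∈ V} ∪ {x | x ∉ closedBall (0 : Euc n) r ∧ ∅ ∈ V}) :=
      (isOpen_setOf_singleton_mem hV).union
        (isClosed_closedBall.isOpen_compl.inter isOpen_const)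
    exact (congrArg IsOpen (Set.ext fun x => key x)).mpr this

/-- Having no point in a closed ball centred at the origin is the basic open condition `C(B, {∅})`. -/
lemma isOpen_setOf_inter_eq_empty (n : ℕ) {r : ℝ} (hr : 0 < r) :
    IsOpen {c : AtMostOnePt n | c.1.1 ∩ closedBall (0 : Euc n) r = ∅} := by
  have : IsOpen {c : ConfSp n | c.1 ∩ sphere (0 : Euc n) r = ∅ ∧
      c.1 ∩ closedBall (0 : Euc n) r ∈ ({∅} : Set (Set (Euc n)))} := by
    refine TopologicalSpace.isOpen_generateFrom_of_mem ⟨r, hr, 0, {∅}, ⟨by simp, ?_⟩, rfl⟩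
    convert isOpen_univ
    simp
  refine (congrArg IsOpen (Set.ext fun c => ?_)).mpr
    (this.preimage (continuous_subtype_val (p := fun c : ConfSp n => c.1.Subsingleton)))
  refine ⟨fun h => ⟨?_, h⟩, fun h => h.2⟩
  exact Set.subset_empty_iff.1
    ((Set.inter_subset_inter_right _ sphere_subset_closedBall).trans (subset_of_eq h))

/-- The basic open condition `C(B, V)` where `V` consists of the singletons of points of the open
set `W` in the interior of `B`. -/
lemma isOpen_setOf_inter_eq_singleton (n : ℕ) {r : ℝ} (hr : 0 < r) {W : Set (Euc n)}
    (hW : IsOpen W) :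
    IsOpen {c : AtMostOnePt n | c.1.1 ∩ sphere (0 : Euc n) r = ∅ ∧
      ∃ x ∈ W ∩ ball (0 : Euc n) r, c.1.1 ∩ closedBall (0 : Euc n) r = {x}} := by
  have : IsOpen {c : ConfSp n | c.1 ∩ sphere (0 : Euc n) r = ∅ ∧
      c.1 ∩ closedBall (0 : Euc n) r ∈
        {s : Set (Euc n) | ∃ x ∈ W ∩ ball (0 : Euc n) r, s = {x}}} := by
    refine TopologicalSpace.isOpen_generateFrom_of_mem ⟨r, hr, 1, _, ⟨?_, ?_⟩, rfl⟩
    · rintro s ⟨x, hx, rfl⟩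
      exact ⟨by simpa using hx.2, by simp⟩
    · have hc : Continuous fun f : InjTup n 1 (ball (0 : Euc n) r) => f.1 0 :=
        (continuous_apply 0).comp continuous_subtype_val
      convert hW.preimage hc using 1
      ext f
      have hf : Set.range f.1 = {f.1 0} := by
        ext y
        simp [Fin.exists_fin_one, eq_comm]
      simp only [Set.mem_ofPred_eq, hf, Set.mem_preimage]
      constructor
      · rintro ⟨x, hx, h⟩
        rw [Set.singleton_injective h]
        exact hx.1
      · intro h
        exact ⟨_, ⟨h, f.2.2 0⟩, rfl⟩
  exact this.preimage (continuous_subtype_val (p := fun c : ConfSp n => c.1.Subsingleton))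

lemma ofOnePoint_coe_mem {n : ℕ} {r : ℝ} {W : Set (Euc n)} {x : Euc n} (hx : x ∈ W)
    (hr : ‖x‖ < r) :
    ofOnePoint n x ∈ {c : AtMostOnePt n | c.1.1 ∩ sphere (0 : Euc n) r = ∅ ∧
      ∃ x ∈ W ∩ ball (0 : Euc n) r, c.1.1 ∩ closedBall (0 : Euc n) r = {x}} := by
  refine ⟨?_, x, ⟨hx, by simpa using hr⟩, ?_⟩
  · change ({x} : Set (Euc n)) ∩ _ = ∅
    simpa using hr.ne
  · change ({x} : Set (Euc n)) ∩ _ = {x}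
    simpa using hr.le

lemma separated_infty_coe (n : ℕ) (x : Euc n) :
    SeparatedNhds {ofOnePoint n OnePoint.infty} {ofOnePoint n x} := by
  have hr : 0 < ‖x‖ + 1 := by positivity
  refine ⟨_, _, isOpen_setOf_inter_eq_empty n hr,
    isOpen_setOf_inter_eq_singleton n hr isOpen_univ, ?_,
    Set.singleton_subset_iff.2 (ofOnePoint_coe_mem (Set.mem_univ x) (lt_add_one _)), ?_⟩
  · exact Set.singleton_subset_iff.2 (Set.empty_inter _)
  · rw [Set.disjoint_left]
    rintro c h1 ⟨-, y, -, h2⟩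
    exact Set.singleton_ne_empty y (h2.symm.trans h1)

instance instT2SpaceAtMostOnePt (n : ℕ) : T2Space (AtMostOnePt n) := by
  suffices h : ∀ c d : AtMostOnePt n, c ≠ d → SeparatedNhds {c} {d} by
    refine ⟨fun c d hcd => ?_⟩
    obtain ⟨U, W, hU, hW, hc, hd, hUW⟩ := h c d hcd
    exact ⟨U, W, hU, hW, hc rfl, hd rfl, hUW⟩
  intro c d hcd
  obtain ⟨a, rfl⟩ := (ofOnePoint_bijective n).2 c
  obtain ⟨b, rfl⟩ := (ofOnePoint_bijective n).2 d
  induction a using OnePoint.rec with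
  | infty =>
    induction b using OnePoint.rec with
    | infty => exact absurd rfl hcd
    | coe y => exact separated_infty_coe n y
  | coe x =>
    induction b using OnePoint.rec with
    | infty => exact (separated_infty_coe n x).symm
    | coe y =>
      have hxy : x ≠ y := fun h => hcd (by rw [h])
      obtain ⟨U, W, hU, hW, hxU, hyW, hUW⟩ := t2_separation hxy
      have hr : 0 < max ‖x‖ ‖y‖ + 1 := by positivity
      refine ⟨_, _, isOpen_setOf_inter_eq_singleton n hr hU,
        isOpen_setOf_inter_eq_singleton n hr hW,
        Set.singleton_subset_iff.2 (ofOnePoint_coe_mem hxU ?_),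
        Set.singleton_subset_iff.2 (ofOnePoint_coe_mem hyW ?_), ?_⟩
      · exact (le_max_left _ _).trans_lt (lt_add_one _)
      · exact (le_max_right _ _).trans_lt (lt_add_one _)
      · rw [Set.disjoint_left]
        rintro c ⟨-, u, hu, h1⟩ ⟨-, w, hw, h2⟩
        have huw : u = w := Set.singleton_injective (h1.symm.trans h2)
        exact Set.disjoint_left.1 hUW hu.1 (huw ▸ hw.1)

/-- For every `n ≥ 1`, the subspace of `𝒞ⁿ` of configurations with at most one point is
homeomorphic to the one-point compactification `ℝⁿ ∪ {∞}` of `ℝⁿ`, via the map sending a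
singleton `{x}` to `x` and the empty configuration to the point at infinity. -/
theorem statement1 (n : ℕ) (hn : 1 ≤ n) :
    ∃ φ : AtMostOnePt n ≃ₜ OnePoint (Euc n),
      (∀ x : Euc n,
        φ ⟨⟨{x}, Set.finite_singleton x⟩, Set.subsingleton_singleton⟩ = (x : OnePoint (Euc n))) ∧
      φ ⟨⟨∅, Set.finite_empty⟩, Set.subsingleton_empty⟩ = OnePoint.infty := by
  let e : OnePoint (Euc n) ≃ AtMostOnePt n := Equiv.ofBijective _ (ofOnePoint_bijective n)
  have he : Continuous e := continuous_ofOnePoint n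
  let h : OnePoint (Euc n) ≃ₜ AtMostOnePt n := he.homeoOfEquivCompactToT2
  exact ⟨h.symm, fun x => h.symm_apply_apply (x : OnePoint (Euc n)),
    h.symm_apply_apply OnePoint.infty⟩
end
end

section
/- For every integer n ≥ 1 and every k with 1 ≤ k ≤ n, the space 𝒞ⁿ'ᵏ is path-connected; in particular (taking k = n) the space 𝒞ⁿ itself is path-connected. -/
/-!
Since `k ≥ 1`, translation along the first coordinate axis preserves `ℝᵏ × (0,1)ⁿ⁻ᵏ`. Every finite
configuration `c` is joined to the empty configuration by translating it off to infinity: the path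
is `c + t e₀` for `t ∈ [0, ∞)`, reparametrized to `[0, 1)`, with the value `∅` at the end point.

Continuity at a finite time (`continuous_confShift`): if `c + t₀ e₀` misses the sphere `∂B`, then
for `t` near `t₀` the points lying inside `B` are translates of the same points of `c`, and an
enumeration of these gives a continuous path of injective tuples. Continuity at infinity
(`tendsto_confShift_empty`): a closed ball eventually contains no point of `c + t e₀`, and a basic
neighbourhood of `∅` contains every configuration that misses the corresponding closed ball. The two
facts are combined into a path by `joined_of_tendsto_atTop`.
-/

open Metric Set

noncomputable section

/-- A continuous curve `ℝ → X` that converges at `+∞` gives a path from `f 0` to the limit, by the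
reparametrization `s ↦ s / (1 - s)` of `[0, 1)`. -/
lemma joined_of_tendsto_atTop {X : Type*} [TopologicalSpace X] {f : ℝ → X} {x : X}
    (hf : Continuous f) (hx : Filter.Tendsto f Filter.atTop (nhds x)) : Joined (f 0) x := by
  classical
  let g : ℝ → X := Function.update (fun s => f (s / (1 - s))) 1 x
  have hg : ContinuousOn g (Icc 0 1) := by
    intro s hs
    rcases eq_or_lt_of_le hs.2 with rfl | hlt
    · refine continuousWithinAt_update_same.2 (hx.comp ?_)
      -- `s / (1 - s)` tends to `+∞` as `s → 1` from the left.
      have hinv : Filter.Tendsto (fun s : ℝ => (1 - s)⁻¹) (nhdsWithin 1 (Icc 0 1 \ {1}))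
          Filter.atTop := by
        refine tendsto_inv_nhdsGT_zero.comp (tendsto_nhdsWithin_iff.2 ⟨?_, ?_⟩)
        · have : Filter.Tendsto (fun s : ℝ => 1 - s) (nhds 1) (nhds (1 - 1)) :=
            tendsto_const_nhds.sub Filter.tendsto_id
          rw [sub_self] at this
          exact this.mono_left nhdsWithin_le_nhds
        · filter_upwards [self_mem_nhdsWithin] with s hs
          exact sub_pos.2 (lt_of_le_of_ne hs.1.2 hs.2)
      exact Filter.Tendsto.pos_mul_atTop one_pos
        (Filter.tendsto_id.mono_left nhdsWithin_le_nhds) hinv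
    · apply ContinuousAt.continuousWithinAt
      rw [continuousAt_update_of_ne hlt.ne]
      apply hf.continuousAt.comp
      exact continuousAt_id.div (continuousAt_const.sub continuousAt_id) (by simp; linarith)
  refine ⟨⟨⟨fun s => g s, hg.comp_continuous continuous_subtype_val fun s => s.2⟩, ?_, ?_⟩⟩
  · simp [g]
  · simp [g]

/-- The configuration `c` translated by `t • e`. -/
def confShift {n : ℕ} (e : Euc n) (c : ConfSp n) (t : ℝ) : ConfSp n :=
  ⟨(fun x => x + t • e) '' c.1, c.2.image _⟩

lemma confShift_zero {n : ℕ} (e : Euc n) (c : ConfSp n) : confShift e c 0 = c :=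
  Subtype.ext (by simp [confShift])

/-- The empty configuration. -/
def emptyConf (n : ℕ) : ConfSp n := ⟨∅, finite_empty⟩

lemma continuous_confShift {n : ℕ} (e : Euc n) (c : ConfSp n) : Continuous (confShift e c) := by
  refine continuous_generateFrom_iff.2 ?_
  rintro _ ⟨r, -, p, V, ⟨hV, hVo⟩, rfl⟩
  refine isOpen_iff_mem_nhds.2 fun t₀ ⟨hsph, hmem⟩ => ?_
  have hcont : ∀ x : Euc n, Continuous fun t : ℝ => x + t • e := fun x => by fun_prop
  -- `S` is the set of points of `c` that are inside the ball at time `t₀`.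
  let S : Set (Euc n) := {x ∈ c.1 | x + t₀ • e ∈ ball 0 r}
  have hSfin : S.Finite := c.2.subset fun x hx => hx.1
  have hstay : ∀ᶠ t in nhds t₀, ∀ x ∈ c.1,
      (x ∈ S → x + t • e ∈ ball 0 r) ∧ (x ∉ S → x + t • e ∉ closedBall 0 r) := by
    refine (Filter.eventually_all_finite c.2).2 fun x hx => ?_
    by_cases hxS : x ∈ S
    · filter_upwards [(hcont x).continuousAt.eventually (isOpen_ball.mem_nhds hxS.2)] with t ht
      exact ⟨fun _ => ht, fun h => absurd hxS h⟩
    · have hout : x + t₀ • e ∈ (closedBall (0 : Euc n) r)ᶜ := by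
        intro hcl
        rw [← ball_union_sphere] at hcl
        rcases hcl with hb | hs
        · exact hxS ⟨hx, hb⟩
        · exact (hsph.subset ⟨mem_image_of_mem _ hx, hs⟩ : _ ∈ (∅ : Set (Euc n)))
      filter_upwards [(hcont x).continuousAt.eventually
        (isClosed_closedBall.isOpen_compl.mem_nhds hout)] with t ht
      exact ⟨fun h => absurd h hxS, fun _ => ht⟩
  -- As long as `t` satisfies the condition of `hstay`, the part inside the ball is `S + t • e`.
  have hinter : ∀ t : ℝ, (∀ x ∈ c.1,
      (x ∈ S → x + t • e ∈ ball 0 r) ∧ (x ∉ S → x + t • e ∉ closedBall 0 r)) →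
      (confShift e c t).1 ∩ closedBall 0 r = (fun x => x + t • e) '' S := by
    intro t ht
    ext y
    constructor
    · rintro ⟨⟨x, hx, rfl⟩, hy⟩
      exact ⟨x, by_contra fun h => (ht x hx).2 h hy, rfl⟩
    · rintro ⟨x, hx, rfl⟩
      exact ⟨⟨x, hx.1, rfl⟩, ball_subset_closedBall ((ht x hx.1).1 hx)⟩
  have hinj : ∀ t : ℝ, Function.Injective fun x : Euc n => x + t • e :=
    fun t => add_left_injective _
  have hcard : S.ncard = p := by
    have h := (hV _ hmem).2
    rwa [hinter t₀ hstay.self_of_nhds, ncard_image_of_injective _ (hinj t₀)] at h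
  obtain ⟨f, hfinj, hfS⟩ : ∃ f : Fin p → Euc n, Function.Injective f ∧ range f = S := by
    have := hSfin.to_subtype
    let E := (Finite.equivFinOfCardEq (show Nat.card S = p from hcard)).symm
    refine ⟨fun i => E i, Subtype.val_injective.comp E.injective, ?_⟩
    rw [show (fun i => (E i : Euc n)) = Subtype.val ∘ E from rfl, E.surjective.range_comp,
      Subtype.range_coe]
  have hrange : ∀ t : ℝ, range (fun i => f i + t • e) = (fun x => x + t • e) '' S := fun t => by
    rw [← hfS, ← range_comp]; rfl
  have htup : ∀ t : ℝ, (∀ x ∈ c.1,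
      (x ∈ S → x + t • e ∈ ball 0 r) ∧ (x ∉ S → x + t • e ∉ closedBall 0 r)) →
      (fun i => f i + t • e) ∈ InjTup n p (ball 0 r) := fun t ht =>
    ⟨(hinj t).comp hfinj, fun i => by
      have hi : f i ∈ S := hfS ▸ mem_range_self i
      exact (ht _ hi.1).1 hi⟩
  obtain ⟨W, hW, hWV⟩ := isOpen_induced_iff.1 hVo
  have hiff : ∀ F : InjTup n p (ball 0 r), F.1 ∈ W ↔ range F.1 ∈ V := fun F =>
    Set.ext_iff.1 hWV F
  have hW₀ : (fun i => f i + t₀ • e) ∈ W := by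
    refine (hiff ⟨_, htup t₀ hstay.self_of_nhds⟩).2 ?_
    rw [hrange, ← hinter t₀ hstay.self_of_nhds]
    exact hmem
  have hWev : ∀ᶠ t in nhds t₀, (fun i => f i + t • e) ∈ W :=
    (continuous_pi fun i => hcont (f i)).continuousAt.eventually (hW.mem_nhds hW₀)
  filter_upwards [hstay, hWev] with t ht htW
  refine ⟨?_, ?_⟩
  · refine eq_empty_of_forall_notMem ?_
    rintro _ ⟨⟨x, hx, rfl⟩, hs⟩
    by_cases hxS : x ∈ S
    · exact sphere_disjoint_ball.le_bot ⟨hs, (ht x hx).1 hxS⟩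
    · exact (ht x hx).2 hxS (sphere_subset_closedBall hs)
  · rw [hinter t ht, ← hrange]
    exact (hiff ⟨_, htup t ht⟩).1 htW

lemma tendsto_confShift_empty {n : ℕ} {e : Euc n} (he : e ≠ 0) (c : ConfSp n) :
    Filter.Tendsto (confShift e c) Filter.atTop (nhds (emptyConf n)) := by
  refine TopologicalSpace.tendsto_nhds_generateFrom_iff.2 ?_
  rintro _ ⟨r, -, p, V, -, rfl⟩ ⟨-, hmem⟩
  have hfar : ∀ᶠ t : ℝ in Filter.atTop, ∀ x ∈ c.1, x + t • e ∉ closedBall 0 r := by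
    refine (Filter.eventually_all_finite c.2).2 fun x _ => ?_
    filter_upwards [Filter.eventually_gt_atTop ((r + ‖x‖) / ‖e‖), Filter.eventually_ge_atTop 0]
      with t ht ht0 hmem
    rw [div_lt_iff₀ (norm_pos_iff.2 he)] at ht
    rw [mem_closedBall_zero_iff] at hmem
    have h1 : ‖t • e‖ = t * ‖e‖ := by rw [norm_smul, Real.norm_of_nonneg ht0]
    have h2 : ‖t • e‖ ≤ ‖x + t • e‖ + ‖x‖ := by
      simpa using norm_sub_le (x + t • e) x
    linarith
  filter_upwards [hfar] with t ht
  have hempty : (confShift e c t).1 ∩ closedBall 0 r = ∅ := by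
    refine eq_empty_of_forall_notMem ?_
    rintro _ ⟨⟨x, hx, rfl⟩, hy⟩
    exact ht x hx hy
  refine ⟨subset_empty_iff.1 (hempty ▸ inter_subset_inter_right _ sphere_subset_closedBall), ?_⟩
  rw [hempty]
  simpa [emptyConf] using hmem

/-- For every `n ≥ 1` and every `k` with `1 ≤ k ≤ n`, the space `𝒞ⁿ'ᵏ` is
path-connected; in particular (the case `k = n`) the space `𝒞ⁿ` itself is
path-connected. -/
theorem statement2 (n : ℕ) (hn : 1 ≤ n) :
    (∀ k : ℕ, 1 ≤ k → k ≤ n → PathConnectedSpace (ConfSpk n k)) ∧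
      PathConnectedSpace (ConfSp n) := by
  have he : EuclideanSpace.single (⟨0, hn⟩ : Fin n) (1 : ℝ) ≠ 0 := by simp
  refine ⟨fun k hk _ => ?_, ?_⟩
  · have hbox : ∀ (c : ConfSpk n k) (t : ℝ),
        (confShift (EuclideanSpace.single (⟨0, hn⟩ : Fin n) (1 : ℝ)) c.1 t).1 ⊆
          BoxRegion n k := by
      rintro c t _ ⟨x, hx, rfl⟩ i hi
      have hi0 : i ≠ ⟨0, hn⟩ := by
        rintro rfl
        exact absurd hk (not_le.2 (Nat.lt_one_iff.2 (Nat.le_zero.1 hi)))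
      simpa [hi0] using c.2 hx i hi
    let o : ConfSpk n k := ⟨emptyConf n, empty_subset _⟩
    have hjoin : ∀ c : ConfSpk n k, Joined c o := fun c => by
      let f : ℝ → ConfSpk n k := fun t => ⟨_, hbox c t⟩
      have hf : Continuous f := (continuous_confShift _ c.1).subtype_mk _
      have hlim : Filter.Tendsto f Filter.atTop (nhds o) :=
        tendsto_subtype_rng.2 (tendsto_confShift_empty he c.1)
      have h0 : f 0 = c := Subtype.ext (confShift_zero _ _)
      exact h0 ▸ joined_of_tendsto_atTop hf hlim
    exact ⟨⟨o⟩, fun c d => (hjoin c).trans (hjoin d).symm⟩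
  · have hjoin : ∀ c : ConfSp n, Joined c (emptyConf n) := fun c => by
      have h := joined_of_tendsto_atTop (continuous_confShift _ c) (tendsto_confShift_empty he c)
      rwa [confShift_zero] at h
    exact ⟨⟨emptyConf n⟩, fun c d => (hjoin c).trans (hjoin d).symm⟩
end
end

section
/- For integers 0 ≤ k < n, the inclusion 𝒞ⁿ'ᵏ → ℳⁿ'ᵏ sending a configuration c to the pair (c, 1) is a homotopy equivalence. -/
/-!
The inverse of `c ↦ (c, 1)` is `(c, a) ↦ S_{1 / max a 1} c`, where `S_l` multiplies the coordinate
of index `k` by `l`; it is a strict retraction of the inclusion. The other composite is deformed to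
the identity by the straight-line homotopy
`(t, (c, a)) ↦ (S_{(1 - t) + t / max a 1} c, (1 - t) a + t)`, which stays in the monoid space since
`a / max a 1 ≤ 1`. Using `max a 1` in place of `a` avoids dividing by zero at `a = 0`.

All the topological content is in `continuous_scaleConf`: for a positive factor `l`, the
configuration `S_l c` depends continuously on `(l, c)`. Its proof rests on
`ConfSp.eventually_tuple`: the configurations near `c₀` are, inside a large ball containing `c₀`,
the ranges of injective tuples near an enumeration of `c₀`. Points outside the large ball are not
brought back into a given smaller ball by `S_l`, as long as `l` stays away from `0`.
-/

open Metric Set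

noncomputable section

/-- The inclusion `𝒞ⁿ'ᵏ → ℳⁿ'ᵏ` sending a configuration `c` to the pair `(c, 1)`. -/
def monIncl (n k : ℕ) (c : ConfSpk n k) : Mon n k :=
  ⟨(c.1, 1), zero_le_one, fun x hx =>
    ⟨fun i hik => c.2 hx i (le_of_eq hik.symm), fun i hik => c.2 hx i (le_of_lt hik)⟩⟩

/-! ### Neighbourhoods in the configuration space -/

/-- If the injective tuple `f₀` enumerates the points of `c₀` in a ball whose boundary `c₀` avoids,
then every `c` near `c₀` meets that ball in the range of an injective tuple near `f₀`. -/
lemma ConfSp.eventually_tuple {n p : ℕ} {c₀ : ConfSp n} {R : ℝ} (hR : 0 < R)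
    {f₀ : Fin p → Euc n} (hf₀ : f₀ ∈ InjTup n p (ball 0 R))
    (hs : c₀.1 ∩ sphere 0 R = ∅) (hc : c₀.1 ∩ closedBall 0 R = Set.range f₀)
    {W : Set (Fin p → Euc n)} (hW : W ∈ nhds f₀) :
    ∀ᶠ c in nhds c₀, ∃ f ∈ W, Function.Injective f ∧ c.1 ∩ closedBall 0 R = Set.range f := by
  obtain ⟨W', hW'W, hW'o, hfW'⟩ := _root_.mem_nhds_iff.1 hW
  let V : Set (Set (Euc n)) := {s | ∃ f ∈ W', f ∈ InjTup n p (ball 0 R) ∧ Set.range f = s}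
  have hV : IsOpenPSubsets n p (ball (0 : Euc n) R) V := by
    refine ⟨?_, ?_⟩
    · rintro s ⟨f, -, hf, rfl⟩
      refine ⟨Set.range_subset_iff.2 hf.2, ?_⟩
      rw [← Set.image_univ, Set.ncard_image_of_injective _ hf.1, Set.ncard_univ, Nat.card_fin]
    · -- Two injective tuples with the same range differ by a permutation of the indices.
      have : {f : InjTup n p (ball (0 : Euc n) R) | Set.range (f : Fin p → Euc n) ∈ V} =
          ⋃ σ : Equiv.Perm (Fin p),
            {f : InjTup n p (ball (0 : Euc n) R) | (f : Fin p → Euc n) ∘ σ ∈ W'} := by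
        ext f
        simp only [Set.mem_ofPred_eq, Set.mem_iUnion]
        constructor
        · rintro ⟨g, hg, hgi, hr⟩
          refine ⟨(Equiv.ofInjective g hgi.1).trans
            ((Equiv.setCongr hr).trans (Equiv.ofInjective _ f.2.1).symm), ?_⟩
          convert hg using 1
          funext i
          simp [Equiv.apply_ofInjective_symm]
        · rintro ⟨σ, hσ⟩
          exact ⟨_, hσ, ⟨f.2.1.comp σ.injective, fun i => f.2.2 _⟩, by
            simp [Set.range_comp]⟩
      rw [this]
      refine isOpen_iUnion fun σ => hW'o.preimage ?_
      exact continuous_pi fun i => (continuous_apply (σ i)).comp continuous_subtype_val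
  have hopen : IsOpen {c : ConfSp n | c.1 ∩ sphere (0 : Euc n) R = ∅ ∧
      c.1 ∩ closedBall (0 : Euc n) R ∈ V} :=
    TopologicalSpace.isOpen_generateFrom_of_mem ⟨R, hR, p, V, hV, rfl⟩
  filter_upwards [hopen.mem_nhds ⟨hs, f₀, hfW', hf₀, hc.symm⟩] with c hcc
  obtain ⟨-, f, hf, hfi, hr⟩ := hcc
  exact ⟨f, hW'W hf, hfi.1, hr.symm⟩

/-! ### Scaling one coordinate -/

/-- Multiplication of the coordinate of index `k` by `l` on `ℝⁿ`. -/
def scalePt (n k : ℕ) (l : ℝ) (x : Euc n) : Euc n :=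
  WithLp.toLp 2 fun i => if (i : ℕ) = k then l * x i else x i

lemma scalePt_apply (n k : ℕ) (l : ℝ) (x : Euc n) (i : Fin n) :
    scalePt n k l x i = if (i : ℕ) = k then l * x i else x i := rfl

lemma scalePt_one (n k : ℕ) (x : Euc n) : scalePt n k 1 x = x := by
  ext i
  simp [scalePt_apply]

lemma scalePt_inv (n k : ℕ) {l : ℝ} (hl : 0 < l) (x : Euc n) :
    scalePt n k l⁻¹ (scalePt n k l x) = x := by
  ext i
  simp only [scalePt_apply]
  split_ifs
  · field_simp
  · rfl

lemma scalePt_injective (n k : ℕ) {l : ℝ} (hl : 0 < l) : Function.Injective (scalePt n k l) :=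
  Function.LeftInverse.injective (scalePt_inv n k hl)

lemma continuous_scalePt (n k : ℕ) :
    Continuous fun q : ℝ × Euc n => scalePt n k q.1 q.2 := by
  unfold scalePt
  refine (PiLp.continuous_toLp 2 _).comp (continuous_pi fun i => ?_)
  split_ifs <;> fun_prop

lemma norm_scalePt_le (n k : ℕ) {l m : ℝ} (hm : 1 ≤ m) (hl : |l| ≤ m) (x : Euc n) :
    ‖scalePt n k l x‖ ≤ m * ‖x‖ := by
  have hm0 : 0 ≤ m := zero_le_one.trans hm
  refine le_of_sq_le_sq ?_ (by positivity)
  rw [mul_pow, EuclideanSpace.norm_sq_eq, EuclideanSpace.norm_sq_eq, Finset.mul_sum]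
  refine Finset.sum_le_sum fun i _ => ?_
  rw [← mul_pow]
  refine pow_le_pow_left₀ (norm_nonneg _) ?_ 2
  rw [scalePt_apply]
  split_ifs
  · rw [norm_mul]
    exact mul_le_mul_of_nonneg_right hl (norm_nonneg _)
  · exact le_mul_of_one_le_left (norm_nonneg _) hm

/-- The image of a configuration under `scalePt`. -/
def scaleConf (n k : ℕ) (l : ℝ) (c : ConfSp n) : ConfSp n :=
  ⟨scalePt n k l '' c.1, c.2.image _⟩

lemma scaleConf_one (n k : ℕ) (c : ConfSp n) : scaleConf n k 1 c = c := by
  apply Subtype.ext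
  simp [scaleConf, scalePt_one]

/-- Scaling is jointly continuous in the configuration and the (positive) factor. -/
lemma continuous_scaleConf {X : Type*} [TopologicalSpace X] (n k : ℕ) {l : X → ℝ}
    (hl : Continuous l) (hpos : ∀ x, 0 < l x) {C : X → ConfSp n} (hC : Continuous C) :
    Continuous fun x => scaleConf n k (l x) (C x) := by
  refine continuous_generateFrom_iff.2 ?_
  rintro _ ⟨r, hr, p, V, ⟨hV1, hV2⟩, rfl⟩
  rw [isOpen_iff_mem_nhds]
  rintro x₀ ⟨hsph, hmem⟩
  set c₀ := C x₀ with hc₀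
  -- `f₀` enumerates all of `c₀`
  obtain ⟨N, f₀, hf₀i, hf₀r⟩ : ∃ (N : ℕ) (f₀ : Fin N → Euc n),
      Function.Injective f₀ ∧ Set.range f₀ = c₀.1 := by
    obtain ⟨N, f, hf⟩ := c₀.2.fin_param
    exact ⟨N, f, hf⟩
  -- a bound for the inverse of `l x`, `x` near `x₀`
  set m : ℝ := max 1 (2 / l x₀) with hm
  have hm1 : 1 ≤ m := le_max_left _ _
  obtain ⟨R, hRr, hR⟩ : ∃ R, m * r < R ∧ c₀.1 ⊆ ball (0 : Euc n) R := by
    obtain ⟨A, hA⟩ := c₀.2.isBounded.subset_ball (0 : Euc n)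
    exact ⟨max A (m * r + 1), lt_max_of_lt_right (by linarith),
      hA.trans (ball_subset_ball (le_max_left _ _))⟩
  have hR0 : 0 < R := lt_trans (by positivity) hRr
  have hf₀R : ∀ i, f₀ i ∈ ball (0 : Euc n) R := fun i => hR (hf₀r ▸ Set.mem_range_self i)
  have hs₀ : c₀.1 ∩ sphere 0 R = ∅ := by
    refine Set.eq_empty_of_forall_notMem ?_
    rintro y ⟨hy, hy'⟩
    have := hR hy
    simp only [mem_ball_zero_iff, mem_sphere_zero_iff_norm] at this hy'
    linarith
  have hb₀ : c₀.1 ∩ closedBall 0 R = Set.range f₀ := by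
    rw [hf₀r]
    exact Set.inter_eq_left.2 (hR.trans ball_subset_closedBall)
  -- the indices whose scaled points lie in the small ball
  let I : Set (Fin N) := {i | scalePt n k (l x₀) (f₀ i) ∈ ball (0 : Euc n) r}
  have hIn : ∀ i, i ∉ I → r < ‖scalePt n k (l x₀) (f₀ i)‖ := by
    intro i hi
    have hi' : r ≤ ‖scalePt n k (l x₀) (f₀ i)‖ := by simpa [I] using hi
    refine lt_of_le_of_ne hi' fun h => ?_
    have : scalePt n k (l x₀) (f₀ i) ∈ (scaleConf n k (l x₀) c₀).1 ∩ sphere 0 r :=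
      ⟨⟨f₀ i, hf₀r ▸ Set.mem_range_self i, rfl⟩, by simp [← h]⟩
    rw [hsph] at this
    exact this
  -- if a tuple sends exactly the indices in `I` to the small ball after scaling, it describes there
  -- every configuration it enumerates in the large ball
  have key : ∀ (a : ℝ) (f : Fin N → Euc n) (c : ConfSp n),
      c.1 ∩ closedBall 0 R = Set.range f →
      (∀ y, ‖scalePt n k a y‖ ≤ r → ‖y‖ ≤ R) →
      (∀ i ∈ I, ‖scalePt n k a (f i)‖ < r) → (∀ i, i ∉ I → r < ‖scalePt n k a (f i)‖) →
      (scaleConf n k a c).1 ∩ sphere 0 r = ∅ ∧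
      (scaleConf n k a c).1 ∩ closedBall 0 r = (fun i => scalePt n k a (f i)) '' I := by
    intro a f c hcf hy h1 h2
    have hmemr : ∀ y ∈ c.1, ‖scalePt n k a y‖ ≤ r → ∃ i ∈ I, f i = y := by
      intro y hyc hyr
      have : y ∈ Set.range f := hcf ▸ ⟨hyc, by simpa using hy y hyr⟩
      obtain ⟨i, rfl⟩ := this
      exact ⟨i, by_contra fun hi => absurd (h2 i hi) (not_lt.2 hyr), rfl⟩
    constructor
    · refine Set.eq_empty_of_forall_notMem ?_
      rintro _ ⟨⟨y, hyc, rfl⟩, hys⟩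
      have hys' : ‖scalePt n k a y‖ = r := by simpa using hys
      obtain ⟨i, hi, rfl⟩ := hmemr y hyc hys'.le
      exact absurd (h1 i hi) (by rw [hys']; exact lt_irrefl r)
    · ext z
      constructor
      · rintro ⟨⟨y, hyc, rfl⟩, hys⟩
        obtain ⟨i, hi, rfl⟩ := hmemr y hyc (by simpa using hys)
        exact ⟨i, hi, rfl⟩
      · rintro ⟨i, hi, rfl⟩
        have : f i ∈ c.1 ∩ closedBall 0 R := hcf ▸ Set.mem_range_self i
        exact ⟨⟨f i, this.1, rfl⟩, by simpa using (h1 i hi).le⟩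
  have hexp : ∀ a : ℝ, l x₀ / 2 < a → ∀ y, ‖scalePt n k a y‖ ≤ r → ‖y‖ ≤ R := by
    intro a ha y hy
    have hl0 := hpos x₀
    have ha0 : 0 < a := by linarith
    have hinv : |a⁻¹| ≤ m := by
      rw [abs_of_pos (inv_pos.2 ha0)]
      refine le_trans ?_ (le_max_right _ _)
      rw [← inv_div]
      exact inv_anti₀ (by positivity) ha.le
    calc ‖y‖ = ‖scalePt n k a⁻¹ (scalePt n k a y)‖ := by rw [scalePt_inv n k ha0]
      _ ≤ m * ‖scalePt n k a y‖ := norm_scalePt_le n k hm1 hinv _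
      _ ≤ m * r := by gcongr
      _ ≤ R := hRr.le
  have hbase := (key (l x₀) f₀ c₀ hb₀ (hexp _ (by linarith [hpos x₀]))
    (fun i hi => by simpa [I] using hi) hIn).2
  -- enumerate `I` by `Fin p`
  have hcard : Nat.card I = p := by
    have h := (hV1 _ hmem).2
    have hinj : Function.Injective fun i => scalePt n k (l x₀) (f₀ i) :=
      (scalePt_injective n k (hpos x₀)).comp hf₀i
    rw [hbase, Set.ncard_image_of_injective I hinj] at h
    rw [← h, Nat.card_coe_set_eq]
  let e : Fin p ≃ I := (Finite.equivFinOfCardEq hcard).symm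
  have himg : ∀ g : Fin N → Euc n, g '' I = Set.range fun j => g (e j) := by
    intro g
    rw [show (fun j => g (e j)) = (fun i : I => g i) ∘ e from rfl, e.surjective.range_comp,
      Set.image_eq_range]
  let T : ℝ × (Fin N → Euc n) → (Fin p → Euc n) := fun q j => scalePt n k q.1 (q.2 (e j))
  have hS : ∀ i, Continuous fun q : ℝ × (Fin N → Euc n) => scalePt n k q.1 (q.2 i) := fun i =>
    (continuous_scalePt n k).comp
      (continuous_fst.prodMk ((continuous_apply i).comp continuous_snd))
  have hT : Continuous T := continuous_pi fun j => hS _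
  obtain ⟨U, hUo, hU⟩ := isOpen_induced_iff.1 hV2
  have hUmem : ∀ g (hg : g ∈ InjTup n p (ball (0 : Euc n) r)), g ∈ U ↔ Set.range g ∈ V :=
    fun g hg => Set.ext_iff.1 hU ⟨g, hg⟩
  have hT₀ : T (l x₀, f₀) ∈ U := by
    rw [hUmem]
    · rw [← himg fun i => scalePt n k (l x₀) (f₀ i), ← hbase]
      exact hmem
    · exact ⟨(scalePt_injective n k (hpos x₀)).comp
        (hf₀i.comp (Subtype.val_injective.comp e.injective)), fun j => (e j).2⟩
  -- the conditions on `(a, f)` near `(l x₀, f₀)`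
  have hev : ∀ᶠ q : ℝ × (Fin N → Euc n) in nhds (l x₀) ×ˢ nhds f₀,
      T q ∈ U ∧ l x₀ / 2 < q.1 ∧ (∀ i ∈ I, ‖scalePt n k q.1 (q.2 i)‖ < r) ∧
      ∀ i, i ∉ I → r < ‖scalePt n k q.1 (q.2 i)‖ := by
    rw [← nhds_prod_eq]
    refine Filter.Eventually.and (hT.continuousAt.eventually (hUo.mem_nhds hT₀)) (.and ?_
      (.and ?_ ?_))
    · exact continuous_fst.continuousAt.eventually (lt_mem_nhds (by linarith [hpos x₀]))
    · refine Filter.eventually_all.2 fun i => ?_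
      by_cases hi : i ∈ I
      · filter_upwards [(hS i).norm.continuousAt.eventually
          (gt_mem_nhds (show ‖scalePt n k (l x₀) (f₀ i)‖ < r by simpa [I] using hi))] with q hq _
        exact hq
      · exact Filter.Eventually.of_forall fun _ h => absurd h hi
    · refine Filter.eventually_all.2 fun i => ?_
      by_cases hi : i ∈ I
      · exact Filter.Eventually.of_forall fun _ h => absurd hi h
      · filter_upwards [(hS i).norm.continuousAt.eventually (lt_mem_nhds (hIn i hi))] with q hq _
        exact hq
  obtain ⟨P, hP, W, hW, hPW⟩ := Filter.mem_prod_iff.1 hev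
  have e1 := hC.continuousAt.eventually
    (ConfSp.eventually_tuple hR0 ⟨hf₀i, hf₀R⟩ hs₀ hb₀ hW)
  have e2 : ∀ᶠ x in nhds x₀, l x ∈ P := hl.continuousAt.eventually hP
  filter_upwards [e1, e2] with x ⟨f, hfW, hfi, hfr⟩ hx
  obtain ⟨h1, h2, h3, h4⟩ := hPW (Set.mk_mem_prod hx hfW)
  obtain ⟨k1, k2⟩ := key (l x) f (C x) hfr (hexp _ h2) h3 h4
  refine ⟨k1, ?_⟩
  rw [k2, himg fun i => scalePt n k (l x) (f i)]
  refine (hUmem (T (l x, f)) ⟨?_, fun j => ?_⟩).1 h1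
  · exact (scalePt_injective n k (hpos x)).comp
      (hfi.comp (Subtype.val_injective.comp e.injective))
  · simpa using h3 _ (e j).2

/-! ### The retraction and the homotopy -/

lemma scalePt_mem_slab {n k : ℕ} {l a b : ℝ} (hl : 0 < l) (hab : l * a ≤ b) {x : Euc n}
    (hx : x ∈ SlabRegion n k a) : scalePt n k l x ∈ SlabRegion n k b := by
  refine ⟨fun i hi => ?_, fun i hi => ?_⟩
  · rw [scalePt_apply, if_pos hi]
    obtain ⟨h0, h1⟩ := hx.1 i hi
    exact ⟨mul_pos hl h0, lt_of_lt_of_le (mul_lt_mul_of_pos_left h1 hl) hab⟩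
  · rw [scalePt_apply, if_neg hi.ne']
    exact hx.2 i hi

lemma slab_one_subset_box (n k : ℕ) : SlabRegion n k 1 ⊆ BoxRegion n k := fun _ hx i hi =>
  (eq_or_lt_of_le hi).elim (fun h => hx.1 i h.symm) (hx.2 i)

lemma scaleConf_subset_slab {n k : ℕ} {l a b : ℝ} (hl : 0 < l) (hab : l * a ≤ b) {c : ConfSp n}
    (hc : c.1 ⊆ SlabRegion n k a) : (scaleConf n k l c).1 ⊆ SlabRegion n k b :=
  Set.image_subset_iff.2 fun _ hx => scalePt_mem_slab hl hab (hc hx)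

lemma inv_max_mul_le_one (a : ℝ) : (max a 1)⁻¹ * a ≤ 1 := by
  have h : 0 < max a 1 := lt_max_of_lt_right one_pos
  rw [inv_mul_le_iff₀ h, mul_one]
  exact le_max_left _ _

lemma continuous_inv_max : Continuous fun a : ℝ => (max a 1)⁻¹ :=
  (continuous_id.max continuous_const).inv₀ fun _ => (lt_max_of_lt_right one_pos).ne'

lemma inv_max_pos (a : ℝ) : 0 < (max a 1)⁻¹ := inv_pos.2 (lt_max_of_lt_right one_pos)

lemma Mon.continuous_conf (n k : ℕ) : Continuous fun q : Mon n k => q.1.1 :=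
  continuous_fst.comp continuous_subtype_val

lemma Mon.continuous_length (n k : ℕ) : Continuous fun q : Mon n k => q.1.2 :=
  continuous_snd.comp continuous_subtype_val

/-- The retraction `(c, a) ↦ S_{1 / max a 1} c` of the monoid space onto the configurations. -/
def monRetr (n k : ℕ) : C(Mon n k, ConfSpk n k) where
  toFun q := ⟨scaleConf n k (max q.1.2 1)⁻¹ q.1.1,
    (scaleConf_subset_slab (inv_max_pos _) (inv_max_mul_le_one _) q.2.2).trans
      (slab_one_subset_box n k)⟩
  continuous_toFun := Continuous.subtype_mk (continuous_scaleConf n k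
    (continuous_inv_max.comp (Mon.continuous_length n k)) (fun _ => inv_max_pos _)
    (Mon.continuous_conf n k)) _

/-- The inclusion `c ↦ (c, 1)` as a bundled continuous map. -/
def monInclMap (n k : ℕ) : C(ConfSpk n k, Mon n k) where
  toFun := monIncl n k
  continuous_toFun :=
    Continuous.subtype_mk (continuous_subtype_val.prodMk continuous_const) _

/-- The scaling factor `(1 - t) + t / max a 1` at time `t` of the homotopy. -/
def homFactor (t a : ℝ) : ℝ := (1 - t) + t * (max a 1)⁻¹

lemma homFactor_pos {t : ℝ} (h0 : 0 ≤ t) (h1 : t ≤ 1) (a : ℝ) : 0 < homFactor t a := by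
  have h := inv_max_pos a
  unfold homFactor
  rcases h0.eq_or_lt with rfl | ht
  · simp
  · have := mul_pos ht h
    linarith

lemma homFactor_mul_le {t : ℝ} (h0 : 0 ≤ t) (a : ℝ) : homFactor t a * a ≤ (1 - t) * a + t := by
  have h := mul_le_mul_of_nonneg_left (inv_max_mul_le_one a) h0
  unfold homFactor
  linarith

/-- The straight-line homotopy from the identity of the monoid space to the retraction followed by
the inclusion. -/
def monHomotopy (n k : ℕ) :
    ContinuousMap.Homotopy (ContinuousMap.id (Mon n k)) ((monInclMap n k).comp (monRetr n k)) where
  toFun z := ⟨(scaleConf n k (homFactor z.1 z.2.1.2) z.2.1.1,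
      (1 - (z.1 : ℝ)) * z.2.1.2 + z.1),
    add_nonneg (mul_nonneg (sub_nonneg.2 z.1.2.2) z.2.2.1) z.1.2.1,
    scaleConf_subset_slab (homFactor_pos z.1.2.1 z.1.2.2 _) (homFactor_mul_le z.1.2.1 _) z.2.2.2⟩
  continuous_toFun := by
    have ht : Continuous fun z : unitInterval × Mon n k => (z.1 : ℝ) :=
      continuous_subtype_val.comp continuous_fst
    have ha : Continuous fun z : unitInterval × Mon n k => z.2.1.2 :=
      (Mon.continuous_length n k).comp continuous_snd
    refine Continuous.subtype_mk (Continuous.prodMk (continuous_scaleConf n k ?_ ?_ ?_) ?_) _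
    · exact (continuous_const.sub ht).add (ht.mul (continuous_inv_max.comp ha))
    · exact fun z => homFactor_pos z.1.2.1 z.1.2.2 _
    · exact (Mon.continuous_conf n k).comp continuous_snd
    · exact ((continuous_const.sub ht).mul ha).add ht
  map_zero_left q := by
    apply Subtype.ext
    simp [homFactor, scaleConf_one]
  map_one_left q := by
    apply Subtype.ext
    change (scaleConf n k (homFactor 1 q.1.2) q.1.1, (1 - (1 : ℝ)) * q.1.2 + 1) =
      (scaleConf n k (max q.1.2 1)⁻¹ q.1.1, (1 : ℝ))
    simp [homFactor]

/-- For `0 ≤ k < n`, the inclusion `𝒞ⁿ'ᵏ → ℳⁿ'ᵏ`, `c ↦ (c, 1)`, is a homotopy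
equivalence. -/
theorem statement4 (n k : ℕ) (hkn : k < n) :
    ∃ E : ContinuousMap.HomotopyEquiv (ConfSpk n k) (Mon n k),
      ∀ c : ConfSpk n k, E.toFun c = monIncl n k c := by
  refine ⟨⟨monInclMap n k, monRetr n k, ?_, ⟨(monHomotopy n k).symm⟩⟩, fun c => rfl⟩
  have : (monRetr n k).comp (monInclMap n k) = ContinuousMap.id _ := by
    ext1 c
    apply Subtype.ext
    change scaleConf n k (max 1 1)⁻¹ c.1 = c.1
    simp [scaleConf_one]
  rw [this]
end
end

section
/- Every path component of ℳ¹'⁰ is contractible; explicitly, for each integer p ≥ 0, the subspace of ℳ¹'⁰ consisting of pairs (c,a) with c a p-element subset of (0,a) is contractible. -/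
/-!
A configuration of `p` points on the line is the same thing as a strictly increasing `p`-tuple, so
the stratum of `p`-point configurations in `ℳ¹'⁰` should be the set of pairs `(g, a)` with
`0 < g 0 < ⋯ < g (p - 1) < a` and `0 ≤ a` (`sortedTuples p`). That set is convex and nonempty, hence
contractible; what has to be proved is that the bijection is a homeomorphism
(`sortedTuplesHomeo`).

The map `(g, a) ↦ (range g, a)` is continuous because, near a tuple with no entry on the sphere
`∂B`, the indices of the entries lying in `B` do not change (`continuous_rangeConf`). For
the inverse, points of `ℝ` can in general escape to infinity in `𝒞¹`, but not in `ℳ¹'⁰`: where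
`a < r` the whole configuration lies in the ball of radius `r`, and then the condition that its
sorted tuple lies in a given open set is one of the basic open conditions
(`isOpen_setOf_sorted_mem`).

The same fact shows that the number of points is locally constant on `ℳ¹'⁰`. The strata being path
connected, they are exactly the path components (`pathComponent_eq`).
-/

open Metric Set

noncomputable section

/-! ### Configurations on the line and their sorted tuples -/

/-- The identification of the real line with `Euc 1`. -/
def lineEmb (x : ℝ) : Euc 1 := WithLp.toLp 2 (fun _ => x)

@[simp] lemma lineEmb_apply (x : ℝ) (i : Fin 1) : lineEmb x i = x := rfl

lemma lineEmb_coord (x : Euc 1) : lineEmb (x 0) = x := by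
  ext i
  rw [lineEmb_apply, Subsingleton.elim i 0]

lemma lineEmb_injective : Function.Injective lineEmb := fun x y h => by
  simpa using congrArg (fun v : Euc 1 => v 0) h

lemma continuous_lineEmb : Continuous lineEmb := by
  unfold lineEmb
  fun_prop

lemma continuous_coord : Continuous fun x : Euc 1 => x 0 := by
  fun_prop

lemma norm_lineEmb (x : ℝ) : ‖lineEmb x‖ = |x| := by
  simp [EuclideanSpace.norm_eq, Real.sqrt_sq_eq_abs]

lemma mem_slabRegion_iff (x : Euc 1) (a : ℝ) : x ∈ SlabRegion 1 0 a ↔ x 0 ∈ Ioo 0 a := by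
  constructor
  · intro h
    exact h.1 0 rfl
  · intro h
    refine ⟨fun i _ => ?_, fun i hi => ?_⟩
    · rwa [Subsingleton.elim i 0]
    · exact absurd i.2 (by omega)

lemma slabRegion_subset_ball {a r : ℝ} (h : a < r) : SlabRegion 1 0 a ⊆ ball (0 : Euc 1) r := by
  intro x hx
  rw [mem_slabRegion_iff] at hx
  rw [mem_ball_zero_iff, ← lineEmb_coord x, norm_lineEmb, abs_of_pos hx.1]
  exact hx.2.trans h

lemma ncard_range_lineEmb {p : ℕ} {g : Fin p → ℝ} (hg : StrictMono g) :
    (range (lineEmb ∘ g)).ncard = p := by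
  rw [← Nat.card_coe_set_eq, Nat.card_range_of_injective (lineEmb_injective.comp hg.injective)]
  simp

lemma exists_sorted {p : ℕ} {c : Set (Euc 1)} (hc : c.Finite) (hp : c.ncard = p) :
    ∃ g : Fin p → ℝ, StrictMono g ∧ c = range (lineEmb ∘ g) := by
  classical
  have hcard : (hc.toFinset.image fun x : Euc 1 => x 0).card = p := by
    rw [Finset.card_image_of_injective, ← hp, ncard_eq_toFinset_card c hc]
    intro x y h
    rw [← lineEmb_coord x, ← lineEmb_coord y]
    exact congrArg lineEmb h
  refine ⟨_, (Finset.orderEmbOfFin _ hcard).strictMono, ?_⟩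
  rw [range_comp, Finset.range_orderEmbOfFin]
  simp [image_image, lineEmb_coord]

lemma sorted_unique {p : ℕ} {g h : Fin p → ℝ} (hg : StrictMono g) (hh : StrictMono h)
    (H : range (lineEmb ∘ g) = range (lineEmb ∘ h)) : g = h := by
  rw [range_comp, range_comp] at H
  exact (hg.range_inj hh).1 (lineEmb_injective.image_injective H)

/-! ### Open conditions on the sorted tuple -/

lemma isOpen_setOf_strictMono (p : ℕ) : IsOpen {g : Fin p → ℝ | StrictMono g} := by
  have : {g : Fin p → ℝ | StrictMono g} = ⋂ i, ⋂ j, {g | i < j → g i < g j} := by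
    ext g
    simp [StrictMono]
  rw [this]
  refine isOpen_iInter_of_finite fun i => isOpen_iInter_of_finite fun j => ?_
  by_cases hij : i < j
  · simpa [hij] using isOpen_lt (continuous_apply i) (continuous_apply j)
  · simp [hij]

/-- The condition that the sorted tuple of a configuration lies in the open set `O` is open on the
part `a < r` of `ℳ¹'⁰`, where all configurations lie in the ball of radius `r`. -/
lemma isOpen_setOf_sorted_mem {p : ℕ} {O : Set (Fin p → ℝ)} (hO : IsOpen O) (r : ℝ) :
    IsOpen {q : Mon 1 0 | q.1.2 < r ∧ ∃ g ∈ O, StrictMono g ∧ q.1.1.1 = range (lineEmb ∘ g)} := by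
  rcases le_or_gt r 0 with hr | hr
  · convert isOpen_empty
    ext q
    simp only [mem_ofPred_eq, mem_empty_iff_false, iff_false]
    intro h
    linarith [q.2.1, h.1]
  set V : Set (Set (Euc 1)) :=
    {s | s ⊆ ball 0 r ∧ ∃ g ∈ O, StrictMono g ∧ s = range (lineEmb ∘ g)} with hVdef
  have hV : IsOpenPSubsets 1 p (ball (0 : Euc 1) r) V := by
    refine ⟨?_, ?_⟩
    · rintro s ⟨hs, g, -, hg, rfl⟩
      exact ⟨hs, ncard_range_lineEmb hg⟩
    -- A tuple has its range in `V` iff some reordering of it is increasing and lies in `O`.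
    · have key : {f : InjTup 1 p (ball (0 : Euc 1) r) | range (f : Fin p → Euc 1) ∈ V} =
          ⋃ σ : Equiv.Perm (Fin p), (fun f : InjTup 1 p (ball (0 : Euc 1) r) =>
            fun i => (f : Fin p → Euc 1) (σ i) 0) ⁻¹' (O ∩ {g | StrictMono g}) := by
        ext f
        simp only [mem_ofPred_eq, mem_iUnion, mem_preimage, mem_inter_iff]
        constructor
        · rintro ⟨-, g, hgO, hg, hfg⟩
          have hmem : ∀ i, ∃ j, (f : Fin p → Euc 1) j = lineEmb (g i) := fun i => by
            have : lineEmb (g i) ∈ range (f : Fin p → Euc 1) := by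
              rw [hfg]
              exact ⟨i, rfl⟩
            exact this
          choose σ hσ using hmem
          have hinj : Function.Injective σ := fun i j hij => by
            apply hg.injective
            apply lineEmb_injective
            rw [← hσ, ← hσ, hij]
          refine ⟨Equiv.ofBijective σ (Finite.injective_iff_bijective.1 hinj), ?_⟩
          have : (fun i => (f : Fin p → Euc 1)
              (Equiv.ofBijective σ (Finite.injective_iff_bijective.1 hinj) i) 0) = g := by
            funext i
            simp [hσ]
          rw [this]
          exact ⟨hgO, hg⟩
        · rintro ⟨σ, h1, h2⟩
          refine ⟨?_, _, h1, h2, ?_⟩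
          · rintro _ ⟨i, rfl⟩
            exact f.2.2 i
          · rw [← σ.surjective.range_comp (f : Fin p → Euc 1)]
            congr 1
            funext i
            simp [lineEmb_coord]
      rw [key]
      refine isOpen_iUnion fun σ => (hO.inter (isOpen_setOf_strictMono p)).preimage ?_
      refine continuous_pi fun i => continuous_coord.comp ?_
      exact (continuous_apply (σ i)).comp continuous_subtype_val
  have hbasic : IsOpen {c : ConfSp 1 | c.1 ∩ sphere (0 : Euc 1) r = ∅ ∧
      c.1 ∩ closedBall (0 : Euc 1) r ∈ V} :=
    TopologicalSpace.isOpen_generateFrom_of_mem ⟨r, hr, p, V, hV, rfl⟩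
  have hfst : Continuous fun q : Mon 1 0 => q.1.1 := continuous_fst.comp continuous_subtype_val
  have hsnd : Continuous fun q : Mon 1 0 => q.1.2 := continuous_snd.comp continuous_subtype_val
  convert (isOpen_lt hsnd continuous_const).inter (hbasic.preimage hfst) using 1
  ext q
  simp only [mem_ofPred_eq, mem_inter_iff, mem_preimage]
  refine and_congr_right fun hqr => ?_
  have hball : q.1.1.1 ⊆ ball (0 : Euc 1) r := q.2.2.trans (slabRegion_subset_ball hqr)
  have h1 : q.1.1.1 ∩ sphere (0 : Euc 1) r = ∅ := by
    rw [← disjoint_iff_inter_eq_empty]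
    exact sphere_disjoint_ball.symm.mono_left hball
  have h2 : q.1.1.1 ∩ closedBall (0 : Euc 1) r = q.1.1.1 :=
    inter_eq_left.2 (hball.trans ball_subset_closedBall)
  rw [h1, h2]
  simp [hVdef, hball]

/-! ### Continuity of the configuration of a tuple -/

/-- The configuration of the entries of a tuple. -/
def rangeConf {n p : ℕ} (f : Fin p → Euc n) : ConfSp n := ⟨range f, finite_range f⟩

/-- A continuous family of injective tuples gives a continuous family of configurations. -/
lemma continuous_rangeConf {X : Type*} [TopologicalSpace X] {n p : ℕ} {F : X → Fin p → Euc n}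
    (hF : Continuous F) (hinj : ∀ x, Function.Injective (F x)) :
    Continuous fun x => rangeConf (F x) := by
  classical
  refine continuous_generateFrom_iff.2 ?_
  rintro _ ⟨r, hr, k, V, ⟨hV1, hV2⟩, rfl⟩
  obtain ⟨O, hO, hOV⟩ := isOpen_induced_iff.1 hV2
  rw [isOpen_iff_mem_nhds]
  rintro x ⟨hx1, hx2⟩
  change range (F x) ∩ sphere (0 : Euc n) r = ∅ at hx1
  change range (F x) ∩ closedBall (0 : Euc n) r ∈ V at hx2
  have hcoord : ∀ i, Continuous fun y => F y i := fun i => (continuous_apply i).comp hF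
  -- The indices of the entries lying in the ball; this set does not change near `x`.
  set S : Set (Fin p) := {i | F x i ∈ ball (0 : Euc n) r} with hS
  have hout : ∀ i ∉ S, F x i ∉ closedBall (0 : Euc n) r := by
    intro i hi hi'
    have : F x i ∈ range (F x) ∩ sphere (0 : Euc n) r := by
      refine ⟨mem_range_self i, ?_⟩
      rw [← closedBall_sdiff_ball]
      exact ⟨hi', hi⟩
    rw [hx1] at this
    exact this
  have himage : ∀ y, (∀ i ∈ S, F y i ∈ ball (0 : Euc n) r) →
      (∀ i ∉ S, F y i ∉ closedBall (0 : Euc n) r) →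
      range (F y) ∩ closedBall (0 : Euc n) r = F y '' S := by
    intro y h1 h2
    ext z
    constructor
    · rintro ⟨⟨i, rfl⟩, hi⟩
      exact ⟨i, by_contra fun h => h2 i h hi, rfl⟩
    · rintro ⟨i, hi, rfl⟩
      exact ⟨mem_range_self i, ball_subset_closedBall (h1 i hi)⟩
  have hSx : range (F x) ∩ closedBall (0 : Euc n) r = F x '' S := himage x (fun _ h => h) hout
  have hcard : Nat.card S = k := by
    rw [Nat.card_coe_set_eq, ← ncard_image_of_injective S (hinj x), ← hSx]
    exact (hV1 _ hx2).2
  obtain ⟨e⟩ : Nonempty (Fin k ≃ S) := ⟨(Finite.equivFinOfCardEq hcard).symm⟩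
  have hrange : ∀ y, range (fun j => F y (e j)) = F y '' S := by
    intro y
    rw [image_eq_range]
    exact e.surjective.range_comp fun i : S => F y i
  have hmem : ∀ y, (∀ i ∈ S, F y i ∈ ball (0 : Euc n) r) →
      ((fun j => F y (e j)) ∈ O ↔ F y '' S ∈ V) := by
    intro y h1
    have hT : (fun j => F y (e j)) ∈ InjTup n k (ball (0 : Euc n) r) :=
      ⟨fun i j hij => e.injective (Subtype.ext (hinj y hij)), fun j => h1 _ (e j).2⟩
    have := Set.ext_iff.1 hOV ⟨_, hT⟩
    simp only [mem_preimage, mem_ofPred_eq] at this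
    rw [this, hrange]
  have ev1 : ∀ᶠ y in nhds x, ∀ i ∈ S, F y i ∈ ball (0 : Euc n) r := by
    rw [Filter.eventually_all]
    intro i
    by_cases hi : i ∈ S
    · filter_upwards [(hcoord i).continuousAt.preimage_mem_nhds (isOpen_ball.mem_nhds hi)]
        with y hy _ using hy
    · exact Filter.Eventually.of_forall fun y h => absurd h hi
  have ev2 : ∀ᶠ y in nhds x, ∀ i ∉ S, F y i ∉ closedBall (0 : Euc n) r := by
    rw [Filter.eventually_all]
    intro i
    by_cases hi : i ∈ S
    · exact Filter.Eventually.of_forall fun y h => absurd hi h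
    · filter_upwards [(hcoord i).continuousAt.preimage_mem_nhds
        (isClosed_closedBall.isOpen_compl.mem_nhds (hout i hi))] with y hy _ using hy
  have ev3 : ∀ᶠ y in nhds x, (fun j => F y (e j)) ∈ O := by
    have hc : Continuous fun y => fun j => F y (e j) := continuous_pi fun j => hcoord _
    refine hc.continuousAt.preimage_mem_nhds (hO.mem_nhds ?_)
    rw [hmem x fun _ h => h, ← hSx]
    exact hx2
  filter_upwards [ev1, ev2, ev3] with y h1 h2 h3
  refine ⟨?_, ?_⟩
  · rw [eq_empty_iff_forall_notMem]
    rintro _ ⟨⟨i, rfl⟩, hi⟩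
    by_cases hiS : i ∈ S
    · exact disjoint_left.1 sphere_disjoint_ball hi (h1 i hiS)
    · exact h2 i hiS (sphere_subset_closedBall hi)
  · change range (F y) ∩ closedBall (0 : Euc n) r ∈ V
    rw [himage y h1 h2]
    exact (hmem y h1).1 h3

/-! ### The strata as convex sets -/

/-- The pairs `(g, a)` with `g` a strictly increasing `p`-tuple in the interval `(0, a)` and
`0 ≤ a`; this last condition matters only for `p = 0`. -/
def sortedTuples (p : ℕ) : Set ((Fin p → ℝ) × ℝ) :=
  {x | StrictMono x.1 ∧ (∀ i, x.1 i ∈ Ioo 0 x.2) ∧ 0 ≤ x.2}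

lemma convex_sortedTuples (p : ℕ) : Convex ℝ (sortedTuples p) := by
  have h : ∀ {s t u v x y : ℝ}, 0 ≤ s → 0 ≤ t → s + t = 1 → u < v → x < y →
      s * u + t * x < s * v + t * y := by
    intro s t u v x y hs ht hst huv hxy
    rcases hs.eq_or_lt with rfl | hs
    · obtain rfl : t = 1 := by linarith
      linarith
    · nlinarith [mul_lt_mul_of_pos_left huv hs, mul_le_mul_of_nonneg_left hxy.le ht]
  rintro ⟨g, a⟩ ⟨hg, hga, ha⟩ ⟨k, b⟩ ⟨hk, hkb, hb⟩ s t hs ht hst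
  simp only at hg hga ha hk hkb hb
  refine ⟨fun i j hij => ?_, fun i => ⟨?_, ?_⟩, ?_⟩
  · simpa using h hs ht hst (hg hij) (hk hij)
  · simpa using h hs ht hst (hga i).1 (hkb i).1
  · simpa using h hs ht hst (hga i).2 (hkb i).2
  · simp only [Prod.smul_mk, Prod.mk_add_mk, smul_eq_mul]
    positivity

lemma nonempty_sortedTuples (p : ℕ) : (sortedTuples p).Nonempty := by
  refine ⟨(fun i => (i : ℝ) + 1, p + 1), fun i j hij => ?_, fun i => ⟨?_, ?_⟩, ?_⟩
  · have : ((i : ℕ) : ℝ) < (j : ℕ) := by exact_mod_cast hij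
    simpa using this
  · simp only
    positivity
  · simp
  · simp only
    positivity

/-- The subspace of `ℳ¹'⁰` of pairs `(c, a)` where `c` has `p` elements. -/
abbrev Stratum (p : ℕ) : Type := {q : Mon 1 0 // q.1.1.1.ncard = p}

/-- The map `(g, a) ↦ (range g, a)`. -/
def toStratum (p : ℕ) (x : sortedTuples p) : Stratum p :=
  ⟨⟨(rangeConf (lineEmb ∘ x.1.1), x.1.2), x.2.2.2, by
    rintro _ ⟨i, rfl⟩
    rw [mem_slabRegion_iff]
    exact x.2.2.1 i⟩, ncard_range_lineEmb x.2.1⟩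

lemma toStratum_bijective (p : ℕ) : Function.Bijective (toStratum p) := by
  constructor
  · intro x y hxy
    have h1 : range (lineEmb ∘ x.1.1) = range (lineEmb ∘ y.1.1) :=
      congrArg (fun q : Stratum p => q.1.1.1.1) hxy
    have h2 : x.1.2 = y.1.2 := congrArg (fun q : Stratum p => q.1.1.2) hxy
    exact Subtype.ext (Prod.ext (sorted_unique x.2.1 y.2.1 h1) h2)
  · rintro ⟨⟨⟨⟨c, hc⟩, a⟩, ha, hca⟩, hp⟩
    obtain ⟨g, hg, rfl⟩ := exists_sorted hc hp
    exact ⟨⟨(g, a), hg, fun i => (mem_slabRegion_iff _ _).1 (hca (mem_range_self i)), ha⟩, rfl⟩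

lemma continuous_toStratum (p : ℕ) : Continuous (toStratum p) := by
  have hF : Continuous fun x : sortedTuples p => lineEmb ∘ x.1.1 :=
    continuous_pi fun i => continuous_lineEmb.comp
      ((continuous_apply i).comp (continuous_fst.comp continuous_subtype_val))
  refine Continuous.subtype_mk (Continuous.subtype_mk (Continuous.prodMk ?_ ?_) _) _
  · exact continuous_rangeConf hF fun x => lineEmb_injective.comp x.2.1.injective
  · exact continuous_snd.comp continuous_subtype_val

/-- The stratum of `p`-point configurations is the space of sorted tuples. -/
def sortedTuplesHomeo (p : ℕ) : sortedTuples p ≃ₜ Stratum p where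
  toEquiv := Equiv.ofBijective (toStratum p) (toStratum_bijective p)
  continuous_toFun := continuous_toStratum p
  continuous_invFun := by
    set e := Equiv.ofBijective (toStratum p) (toStratum_bijective p) with he
    have hval : ∀ q : Stratum p, toStratum p (e.symm q) = q := e.apply_symm_apply
    refine Continuous.subtype_mk (f := fun q => (e.symm q).1) (Continuous.prodMk ?_ ?_) _
    · refine continuous_def.2 fun O hO => ?_
      have key : (fun q : Stratum p => (e.symm q).1.1) ⁻¹' O =
          ⋃ r : ℝ, Subtype.val ⁻¹' {q : Mon 1 0 | q.1.2 < r ∧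
            ∃ g ∈ O, StrictMono g ∧ q.1.1.1 = range (lineEmb ∘ g)} := by
        ext q
        have hq : range (lineEmb ∘ (e.symm q).1.1) = q.1.1.1.1 :=
          congrArg (fun q : Stratum p => q.1.1.1.1) (hval q)
        simp only [mem_preimage, mem_iUnion, mem_ofPred_eq]
        constructor
        · intro h
          exact ⟨q.1.1.2 + 1, by linarith, _, h, (e.symm q).2.1, hq.symm⟩
        · rintro ⟨r, -, g, hgO, hg, hqg⟩
          rwa [sorted_unique (e.symm q).2.1 hg (hq.trans hqg)]
      rw [key]
      exact isOpen_iUnion fun r => (isOpen_setOf_sorted_mem hO r).preimage continuous_subtype_val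
    · have : (fun q : Stratum p => (e.symm q).1.2) = fun q => q.1.1.2 := by
        funext q
        exact congrArg (fun q : Stratum p => q.1.1.2) (hval q)
      rw [this]
      exact continuous_snd.comp (continuous_subtype_val.comp continuous_subtype_val)

lemma contractibleSpace_stratum (p : ℕ) : ContractibleSpace (Stratum p) := by
  have := (convex_sortedTuples p).contractibleSpace (nonempty_sortedTuples p)
  exact (sortedTuplesHomeo p).symm.contractibleSpace

/-! ### Path components -/

lemma isLocallyConstant_ncard : IsLocallyConstant fun q : Mon 1 0 => q.1.1.1.ncard := by
  rw [IsLocallyConstant.iff_isOpen_fiber]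
  intro p
  have key : (fun q : Mon 1 0 => q.1.1.1.ncard) ⁻¹' {p} =
      ⋃ r : ℝ, {q : Mon 1 0 | q.1.2 < r ∧
        ∃ g ∈ (univ : Set (Fin p → ℝ)), StrictMono g ∧ q.1.1.1 = range (lineEmb ∘ g)} := by
    ext q
    simp only [mem_preimage, mem_singleton_iff, mem_iUnion, mem_ofPred_eq]
    constructor
    · intro h
      obtain ⟨g, hg, hqg⟩ := exists_sorted q.1.1.2 h
      exact ⟨q.1.2 + 1, by linarith, g, mem_univ _, hg, hqg⟩
    · rintro ⟨r, -, g, -, hg, hqg⟩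
      rw [hqg, ncard_range_lineEmb hg]
  rw [key]
  exact isOpen_iUnion fun r => isOpen_setOf_sorted_mem isOpen_univ r

lemma pathComponent_eq (x : Mon 1 0) :
    pathComponent x = {q : Mon 1 0 | q.1.1.1.ncard = x.1.1.1.ncard} := by
  ext y
  constructor
  · intro hy
    exact isLocallyConstant_ncard.apply_eq_of_isPreconnected
      isPathConnected_pathComponent.isConnected.isPreconnected hy (mem_pathComponent_self x)
  · intro hy
    have := contractibleSpace_stratum x.1.1.1.ncard
    have hj : Joined (⟨x, rfl⟩ : Stratum x.1.1.1.ncard) ⟨y, hy⟩ := PathConnectedSpace.joined _ _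
    exact hj.map continuous_subtype_val

/-- Every path component of `ℳ¹'⁰` is contractible; explicitly, for each integer `p ≥ 0`,
the subspace of `ℳ¹'⁰` consisting of pairs `(c,a)` with `c` a `p`-element subset of
`(0,a)` is contractible. -/
theorem statement6 :
    (∀ x : Mon 1 0, ContractibleSpace (pathComponent x)) ∧
      ∀ p : ℕ, ContractibleSpace {q : Mon 1 0 // q.1.1.1.ncard = p} := by
  refine ⟨fun x => ?_, contractibleSpace_stratum⟩
  have : ContractibleSpace {q : Mon 1 0 | q.1.1.1.ncard = x.1.1.1.ncard} :=
    contractibleSpace_stratum x.1.1.1.ncard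
  exact (Homeomorph.setCongr (pathComponent_eq x)).contractibleSpace
end
end

section
/- Let F : T → 𝒞ⁿ be a continuous map from a compact topological space T, where n ≥ 1. Then there exists ε > 0 such that for every t ∈ T, the configuration F(t) contains at most one point of the closed ball of radius ε centered at the origin of ℝⁿ. -/
/-! For a finite configuration `c`, some `r > 0` is smaller than the norms of all nonzero points
of `c`, so `c` avoids the sphere of radius `r` and meets the closed ball of radius `r` in a set
`⊆ {0}`, of cardinality `p ≤ 1`. Prescribing this cardinality and avoiding the sphere is an open
condition on `c` (`isOpen_cardCond`), so every `t : T` has a neighbourhood on which one radius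
works. Since the conclusion passes to smaller radii, finitely many such neighbourhoods covering `T`
yield a common `ε`. -/

open Metric Set

noncomputable section

/-- The basic set `C(B, V)` with `B` the closed ball of radius `r` and `V` consisting of all
`p`-element subsets of the interior of `B`. -/
def cardCond (n p : ℕ) (r : ℝ) : Set (ConfSp n) :=
  {c | c.1 ∩ sphere (0 : Euc n) r = ∅ ∧
    c.1 ∩ closedBall (0 : Euc n) r ∈ {s : Set (Euc n) | s ⊆ ball 0 r ∧ s.ncard = p}}

lemma isOpen_cardCond (n p : ℕ) {r : ℝ} (hr : 0 < r) : IsOpen (cardCond n p r) := by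
  refine TopologicalSpace.isOpen_generateFrom_of_mem ⟨r, hr, p, _, ⟨fun s hs => hs, ?_⟩, rfl⟩
  -- Every injective `p`-tuple has a `p`-element range, so the preimage of `V` is everything.
  convert isOpen_univ
  refine eq_univ_of_forall fun f => ⟨?_, ?_⟩
  · rintro _ ⟨i, rfl⟩
    exact f.2.2 i
  · rw [← Set.image_univ, Set.ncard_image_of_injective _ f.2.1, Set.ncard_univ, Nat.card_fin]

lemma exists_inter_closedBall_subset {n : ℕ} {c : Set (Euc n)} (hc : c.Finite) :
    ∃ r : ℝ, 0 < r ∧ c ∩ closedBall 0 r ⊆ {0} := by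
  have hopen : IsOpen (c \ {0})ᶜ := (hc.subset sdiff_subset).isClosed.isOpen_compl
  obtain ⟨r, hr, h⟩ := Metric.nhds_basis_closedBall.mem_iff.1
    (hopen.mem_nhds (show (0 : Euc n) ∈ (c \ {0})ᶜ by simp))
  refine ⟨r, hr, fun x hx => ?_⟩
  by_contra hx0
  exact h hx.2 ⟨hx.1, hx0⟩

lemma exists_mem_cardCond {n : ℕ} (c : ConfSp n) :
    ∃ r : ℝ, 0 < r ∧ ∃ p ≤ 1, c ∈ cardCond n p r := by
  obtain ⟨r, hr, h⟩ := exists_inter_closedBall_subset c.2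
  refine ⟨r, hr, (c.1 ∩ closedBall 0 r).ncard, ?_, ?_, ?_, rfl⟩
  · simpa using Set.ncard_le_ncard h
  · refine eq_empty_of_forall_notMem fun x hx => ?_
    have hx0 : x = 0 := h ⟨hx.1, sphere_subset_closedBall hx.2⟩
    have hxr := hx.2
    simp [hx0] at hxr
    exact hr.ne hxr
  · intro x hx
    rw [show x = 0 from h hx]
    exact mem_ball_self hr

lemma subsingleton_of_mem_cardCond {n p : ℕ} {r : ℝ} (hp : p ≤ 1) {c : ConfSp n}
    (hc : c ∈ cardCond n p r) : (c.1 ∩ closedBall (0 : Euc n) r).Subsingleton := by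
  have hcard : (c.1 ∩ closedBall (0 : Euc n) r).ncard ≤ 1 := hc.2.2.trans_le hp
  intro a ha b hb
  exact (Set.ncard_le_one (c.2.subset inter_subset_left)).1 hcard a ha b hb

/-- If `F : T → 𝒞ⁿ` is a continuous map from a compact space `T` (with `n ≥ 1`), then
there is an `ε > 0` such that for every `t ∈ T` the configuration `F t` contains at most
one point of the closed ball of radius `ε` about the origin of `ℝⁿ`. -/
theorem statement7 (n : ℕ) (hn : 1 ≤ n) (T : Type*) [TopologicalSpace T] [CompactSpace T]
    (F : T → ConfSp n) (hF : Continuous F) :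
    ∃ ε : ℝ, 0 < ε ∧ ∀ t : T, ((F t).1 ∩ closedBall (0 : Euc n) ε).Subsingleton := by
  have key : ∃ ε : ℝ, 0 < ε ∧
      ∀ t ∈ (univ : Set T), ((F t).1 ∩ closedBall (0 : Euc n) ε).Subsingleton := by
    refine isCompact_univ.induction_on
      (p := fun S : Set T => ∃ ε : ℝ, 0 < ε ∧
        ∀ t ∈ S, ((F t).1 ∩ closedBall (0 : Euc n) ε).Subsingleton) ?_ ?_ ?_ ?_
    · exact ⟨1, one_pos, fun t ht => ht.elim⟩
    · rintro S S' hS ⟨ε, hε, h⟩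
      exact ⟨ε, hε, fun t ht => h t (hS ht)⟩
    · rintro S S' ⟨ε, hε, h⟩ ⟨ε', hε', h'⟩
      refine ⟨min ε ε', lt_min hε hε', ?_⟩
      rintro t (ht | ht)
      · exact (h t ht).anti
          (inter_subset_inter_right _ (closedBall_subset_closedBall (min_le_left _ _)))
      · exact (h' t ht).anti
          (inter_subset_inter_right _ (closedBall_subset_closedBall (min_le_right _ _)))
    · intro t _
      obtain ⟨r, hr, p, hp, hmem⟩ := exists_mem_cardCond (F t)
      exact ⟨F ⁻¹' cardCond n p r,
        mem_nhdsWithin_of_mem_nhds (((isOpen_cardCond n p hr).preimage hF).mem_nhds hmem),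
        r, hr, fun s hs => subsingleton_of_mem_cardCond hp hs⟩
  obtain ⟨ε, hε, h⟩ := key
  exact ⟨ε, hε, fun t => h t (mem_univ t)⟩
end
end

section
/- For every integer p ≥ 0, the ordered configuration space of p points in ℝ^ℕ — the subspace of (ℝ^ℕ)ᵖ consisting of injective p-tuples of points of ℝ^ℕ — is contractible. -/
/-!
The contraction is the composite of two straight-line homotopies inside the configuration space.
Let `S` be the right shift on `ℝ^ℕ`, inserting a `0` in front. The map `(1 - t) • id + t • S` is
linear and injective for every real `t` (it is lower bidiagonal, and `S` itself is injective), so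
applying it to every point of a configuration joins the identity to `S` through configurations.
The shifted points all have zeroth coordinate `0`, so moving them in straight lines to the points
`i • e₀` keeps them distinct: for `t ≠ 0` the zeroth coordinates `t * i` differ, and for `t = 0`
the configuration is a shifted one. Hence the identity is homotopic to a constant map.
-/

open Metric Set

noncomputable section

/-- The ordered configuration space of `p` points in `ℝ^ℕ`: the subspace of `(ℝ^ℕ)ᵖ`
consisting of injective `p`-tuples of points of `ℝ^ℕ` (with `ℝ^ℕ` carrying the product
topology). -/
def OrdConf (p : ℕ) : Type := {f : Fin p → (ℕ → ℝ) // Function.Injective f}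

instance (p : ℕ) : TopologicalSpace (OrdConf p) :=
  inferInstanceAs (TopologicalSpace {f : Fin p → (ℕ → ℝ) // Function.Injective f})

/-- The right shift on real sequences: it inserts a `0` at index `0`. -/
def shift (x : ℕ → ℝ) : ℕ → ℝ
  | 0 => 0
  | n + 1 => x n

lemma continuous_shift : Continuous shift := by
  refine continuous_pi fun n => ?_
  cases n with
  | zero => exact continuous_const
  | succ n => exact continuous_apply n

/-- No scalar is an eigenvalue of the shift, so every interpolation between the identity and the
shift separates points. -/
lemma lineShift_injective (t : ℝ) {x y : ℕ → ℝ}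
    (h : ∀ n, (1 - t) * x n + t * shift x n = (1 - t) * y n + t * shift y n) : x = y := by
  funext n
  by_cases ht : t = 1
  · simpa [ht, shift] using h (n + 1)
  · have ht' : 1 - t ≠ 0 := sub_ne_zero.2 (Ne.symm ht)
    induction n with
    | zero => simpa [shift, ht'] using h 0
    | succ n ih => simpa [shift, ih, ht'] using h (n + 1)

lemma shift_injective : Function.Injective shift := fun x y h =>
  lineShift_injective 1 fun n => by rw [h]; ring

lemma OrdConf.continuous_val (p : ℕ) :
    Continuous (fun c : OrdConf p => (c.1 : Fin p → ℕ → ℝ)) :=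
  continuous_subtype_val

/-- Two self-maps of the configuration space are homotopic as soon as the straight lines joining
them stay inside the configuration space. -/
lemma OrdConf.homotopic_of_line {p : ℕ} (f g : C(OrdConf p, OrdConf p))
    (h : ∀ (t : ℝ) (c : OrdConf p), Function.Injective
      (fun i n => (1 - t) * (f c).1 i n + t * (g c).1 i n : Fin p → ℕ → ℝ)) :
    f.Homotopic g := by
  refine ⟨⟨⟨fun q => ⟨_, h q.1 q.2⟩, ?_⟩, fun c => ?_, fun c => ?_⟩⟩
  · refine Continuous.subtype_mk ?_ _
    have hf := (OrdConf.continuous_val p).comp f.continuous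
    have hg := (OrdConf.continuous_val p).comp g.continuous
    refine continuous_pi fun i => continuous_pi fun n => ?_
    have hf' : Continuous fun c => (f c).1 i n :=
      (continuous_apply n).comp ((continuous_apply i).comp hf)
    have hg' : Continuous fun c => (g c).1 i n :=
      (continuous_apply n).comp ((continuous_apply i).comp hg)
    have ht : Continuous fun q : unitInterval × OrdConf p => (q.1 : ℝ) :=
      continuous_subtype_val.comp continuous_fst
    exact ((continuous_const.sub ht).mul (hf'.comp continuous_snd)).add
      (ht.mul (hg'.comp continuous_snd))
  · apply Subtype.ext
    funext i n
    simp
  · apply Subtype.ext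
    funext i n
    simp

/-- The shift applied to every point of a configuration. -/
def OrdConf.shiftMap (p : ℕ) : C(OrdConf p, OrdConf p) where
  toFun c := ⟨fun i => shift (c.1 i), shift_injective.comp c.2⟩
  continuous_toFun := by
    refine Continuous.subtype_mk (continuous_pi fun i => ?_) _
    exact continuous_shift.comp ((continuous_apply i).comp (OrdConf.continuous_val p))

/-- The configuration `0, e₀, 2 • e₀, …` on the zeroth coordinate axis. -/
def OrdConf.base (p : ℕ) : OrdConf p :=
  ⟨fun i n => if n = 0 then (i : ℝ) else 0, fun i j h => by
    simpa [Fin.val_inj] using congrFun h 0⟩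

/-- For every `p ≥ 0`, the ordered configuration space of `p` points in `ℝ^ℕ` is
contractible. -/
theorem statement8 (p : ℕ) : ContractibleSpace (OrdConf p) := by
  rw [contractible_iff_id_nullhomotopic]
  refine ⟨OrdConf.base p, (OrdConf.homotopic_of_line _ (OrdConf.shiftMap p) ?_).trans
    (OrdConf.homotopic_of_line _ _ ?_)⟩
  · intro t c i j h
    exact c.2 (lineShift_injective t fun n => congrFun h n)
  · intro t c i j h
    by_cases ht : t = 0
    · refine (OrdConf.shiftMap p c).2 (funext fun n => ?_)
      simpa [ht] using congrFun h n
    · have hb (k : Fin p) : (OrdConf.base p).1 k 0 = (k : ℝ) := by simp [OrdConf.base]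
      have h0 : (1 - t) * 0 + t * (OrdConf.base p).1 i 0
          = (1 - t) * 0 + t * (OrdConf.base p).1 j 0 := congrFun h 0
      simpa [hb, ht, Fin.val_inj] using h0
end
end

section
/- Let p ≥ 1 and q ≥ 0 be integers, let Dᵖ and D^q denote the closed unit balls in ℝᵖ and ℝ^q, and let K be a closed subset of Dᵖ × D^q such that K ∩ (Dᵖ × {t}) is finite for every t ∈ D^q. Then there exist finitely many distinct points p₁,…,p_s ∈ Dᵖ and open subsets V₁,…,V_s of D^q whose union is D^q, such that K is disjoint from {p_r} × cl(V_r) for each r (cl denoting closure in D^q). -/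
/-!
For `x ∈ Dᵖ` the set `W x` of all `t ∈ D^q` with `(x, t) ∉ K` is open because `K` is closed.
Since `Dᵖ` is infinite (`p ≥ 1`) and the slices of `K` are finite, the sets `W x` cover `D^q`, and
by compactness finitely many of them do. Indexing the cover by the points `x` themselves makes the
chosen points distinct, and the shrinking lemma for the normal space `D^q` replaces the chosen
`W x` by open sets that still cover and whose closures lie inside them.
-/

open Metric Set

noncomputable section

/-- The closed unit ball `Dᵐ` in `ℝᵐ`, as a subspace of Euclidean space. -/
def UnitBall (m : ℕ) : Set (EuclideanSpace ℝ (Fin m)) :=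
  closedBall (0 : EuclideanSpace ℝ (Fin m)) 1

/-- Scattering lemma: if `p ≥ 1` and `K` is a closed subset of `Dᵖ × D^q` meeting each
slice `Dᵖ × {t}` in a finite set, then there are finitely many distinct points
`p₁, …, p_s ∈ Dᵖ` and open sets `V₁, …, V_s ⊆ D^q` covering `D^q` such that `K` is
disjoint from `{p_r} × cl(V_r)` for each `r`. -/
theorem statement11 (p q : ℕ) (hp : 1 ≤ p)
    (K : Set (UnitBall p × UnitBall q)) (hK : IsClosed K)
    (hfin : ∀ t : UnitBall q, {x : UnitBall p | (x, t) ∈ K}.Finite) :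
    ∃ (s : ℕ) (pt : Fin s → UnitBall p) (V : Fin s → Set (UnitBall q)),
      Function.Injective pt ∧
        (∀ r, IsOpen (V r)) ∧
        (⋃ r, V r) = univ ∧
        ∀ r : Fin s, ∀ y ∈ closure (V r), (pt r, y) ∉ K := by
  have : Nonempty (Fin p) := ⟨⟨0, hp⟩⟩
  have : CompactSpace (UnitBall q) :=
    isCompact_iff_compactSpace.mp (isCompact_closedBall 0 1)
  have hinf : Infinite (UnitBall p) :=
    (infinite_of_mem_nhds (0 : EuclideanSpace ℝ (Fin p))
      (closedBall_mem_nhds 0 one_pos)).to_subtype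
  let W : UnitBall p → Set (UnitBall q) := fun x => {y | (x, y) ∉ K}
  have hWo : ∀ x, IsOpen (W x) := fun x =>
    hK.isOpen_compl.preimage (Continuous.prodMk_right x)
  have hcov : univ ⊆ ⋃ x, W x := fun t _ =>
    let ⟨x, hx⟩ := (hfin t).exists_notMem
    mem_iUnion.2 ⟨x, hx⟩
  obtain ⟨F, hF⟩ := isCompact_univ.elim_finite_subcover W hWo hcov
  let pt : Fin F.card → UnitBall p := fun r => F.equivFin.symm r
  have hcovF : ⋃ r, W (pt r) = univ := by
    refine eq_univ_of_forall fun t => ?_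
    obtain ⟨x, hxF, hx⟩ := mem_iUnion₂.1 (hF (mem_univ t))
    exact mem_iUnion.2 ⟨F.equivFin ⟨x, hxF⟩, by simpa [pt] using hx⟩
  obtain ⟨V, hVcov, hVo, hVW⟩ :=
    exists_iUnion_eq_closure_subset (fun r => hWo (pt r)) (fun _ => toFinite _) hcovF
  exact ⟨F.card, pt, V, Subtype.val_injective.comp F.equivFin.symm.injective, hVo, hVcov,
    fun r _ hy => hVW r hy⟩
end
end
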